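/- For every f ∈ LlogL(-1,1), the identity f(x) − ( (1/π)∫_{-1}^1 f(t) dt )·(1-x²)^{-1/2} = T̂(T(f))(x) holds for a.e. x ∈ (-1,1). Consequently, the composed operator T̂∘T maps LlogL(-1,1) into itself and is bounded, with ‖T̂∘T‖_{LlogL→LlogL} ≤ 1 + (1/π)·‖(1-x²)^{-1/2}‖_{LlogL}. -/

import Mathlib

open MeasureTheory Set Filter

noncomputable section

/-- Lebesgue measure restricted to the interval `(-1, 1)`. -/
def μI : Measure ℝ := volume.restrict (Set.Ioo (-1 : ℝ) 1)

/-- The finite Hilbert transform: the principal-value limit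
`T(f)(t) = lim_{ε→0⁺} (1/π) ∫_{x∈(-1,1), |x-t|≥ε} f(x)/(x-t) dx`. -/
def FHT (f : ℝ → ℂ) (t : ℝ) : ℂ :=
  limUnder (nhdsWithin (0 : ℝ) (Set.Ioi 0)) fun ε : ℝ =>
    (Real.pi : ℂ)⁻¹ *
      ∫ x in {x : ℝ | x ∈ Set.Ioo (-1 : ℝ) 1 ∧ ε ≤ |x - t|}, f x / ((x : ℂ) - (t : ℂ))

/-- The operator `T̂(g)(x) = -(1-x²)^{-1/2} T(t ↦ √(1-t²) g(t))(x)`. -/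
def hatT (g : ℝ → ℂ) (x : ℝ) : ℂ :=
  -((Real.sqrt (1 - x ^ 2) : ℂ))⁻¹ * FHT (fun t => (Real.sqrt (1 - t ^ 2) : ℂ) * g t) x

/-- Membership in the Zygmund space `L log L(-1,1)`:
`f` is a.e. measurable on `(-1,1)` and `∫ |f| log⁺|f| < ∞`. -/
def MemLlogL (f : ℝ → ℂ) : Prop :=
  AEStronglyMeasurable f μI ∧
    IntegrableOn (fun x => ‖f x‖ * max (Real.log ‖f x‖) 0) (Set.Ioo (-1 : ℝ) 1)

/-- The distribution function `λ ↦ |{x ∈ (-1,1) : |f(x)| > λ}|`. -/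
def distFun (f : ℝ → ℂ) (lam : ℝ) : ℝ :=
  (volume {x : ℝ | x ∈ Set.Ioo (-1 : ℝ) 1 ∧ lam < ‖f x‖}).toReal

/-- The decreasing rearrangement `f*` of `f`, a function on `(0,2)`. -/
def decRearr (f : ℝ → ℂ) (t : ℝ) : ℝ :=
  sInf {lam : ℝ | 0 ≤ lam ∧ distFun f lam ≤ t}

/-- The `L log L` norm `‖f‖ = ∫_0^2 f*(t) log(2e/t) dt`. -/
def llogLNorm (f : ℝ → ℂ) : ℝ :=
  ∫ t in Set.Ioo (0 : ℝ) 2, decRearr f t * Real.log (2 * Real.exp 1 / t)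

/-- The `L(log L)^α` norm `∫_0^2 f*(t) log^α(2e/t) dt` (for `α = 0` this is the `L¹` norm). -/
def zygNorm (α : ℝ) (f : ℝ → ℂ) : ℝ :=
  ∫ t in Set.Ioo (0 : ℝ) 2, decRearr f t * Real.log (2 * Real.exp 1 / t) ^ α

/-- Membership in the Zygmund space `L(log L)^α(-1,1)`. -/
def MemZyg (α : ℝ) (f : ℝ → ℂ) : Prop :=
  AEStronglyMeasurable f μI ∧
    IntegrableOn (fun t => decRearr f t * Real.log (2 * Real.exp 1 / t) ^ α)
      (Set.Ioo (0 : ℝ) 2)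

/-- Membership in `L(log L)²(-1,1)`: `∫ |f| (log(2+|f|))² < ∞`. -/
def MemLlogL2 (f : ℝ → ℂ) : Prop :=
  AEStronglyMeasurable f μI ∧
    IntegrableOn (fun x => ‖f x‖ * Real.log (2 + ‖f x‖) ^ 2) (Set.Ioo (-1 : ℝ) 1)

/-- The constant `c(β,γ) = max{1/(1-β), 1/(1-γ), 1/(β+γ-1)}`. -/
def cBG (β γ : ℝ) : ℝ := max (max (1 / (1 - β)) (1 / (1 - γ))) (1 / (β + γ - 1))

/-!
Let `Qf` be the conjugate Poisson integral of `f`. If `|ψ| ≤ 1`, then `exp (|Qψ| / 2π)` is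
integrable on `(-1, 1)`, uniformly in the height: its real-part majorant is controlled by Cauchy's
theorem applied to `exp (Cψ / π)`, where `C` is the Cauchy transform. By duality and Young's
inequality `a q ≤ a log⁺ (a / δ) + δ exp q`, the `L¹` norm of `Qf` is bounded by the `L log L` size
of `f`.
Since polynomials times `w = √(1 - x²)` have explicit boundary values, an approximation argument
gives every `f ∈ L log L` a boundary value `H` in `L¹(-1, 1)`, which is `π T f` almost everywhere.

Testing `H` against `w / (x - z)`, whose conjugate function is also explicit, yields
`C(wH)(z) = π (∫ f + R(z) Cf(z))` with `R(z) = √(z² - 1)`. Letting `z` tend to a point of `(-1, 1)`,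
where `R` tends to `i w`, turns this identity into `w T̂T f = w f - (1 / π) ∫ f`.

For the norm bound, `log (2e / t) = 1 + ∫_t^2 ds / s` expresses the `L log L` norm through
`K(s) = ∫_0^s f*`, and `K` is subadditive in `f` because
`K(s) = min_a (a s + ∫ (|f| - a)⁺)`, the minimum being attained at `a = f*(s)`.
-/

open Topology

section Kernels

/-- The Poisson kernel of the upper half-plane at height `ε`, without the factor `1 / π`. -/
def poissonLine (ε s : ℝ) : ℝ := ε / (s ^ 2 + ε ^ 2)

/-- The conjugate Poisson kernel of the upper half-plane at height `ε`, without the factor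
`1 / π`. -/
def conjPoissonLine (ε s : ℝ) : ℝ := s / (s ^ 2 + ε ^ 2)

variable {ε : ℝ}

lemma poissonLine_nonneg (hε : 0 ≤ ε) (s : ℝ) : 0 ≤ poissonLine ε s := by
  unfold poissonLine; positivity

lemma abs_poissonLine_le (hε : ε ≠ 0) (s : ℝ) : |poissonLine ε s| ≤ |ε|⁻¹ := by
  have hε' : 0 < |ε| := abs_pos.2 hε
  rw [poissonLine, abs_div, abs_of_nonneg (a := s ^ 2 + ε ^ 2) (by positivity),
    div_le_iff₀ (by positivity), inv_mul_eq_div, le_div_iff₀ hε']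
  nlinarith [sq_abs ε, sq_nonneg s]

lemma abs_conjPoissonLine_le (hε : ε ≠ 0) (s : ℝ) : |conjPoissonLine ε s| ≤ |ε|⁻¹ := by
  have hε' : 0 < |ε| := abs_pos.2 hε
  rw [conjPoissonLine, abs_div, abs_of_nonneg (a := s ^ 2 + ε ^ 2) (by positivity),
    div_le_iff₀ (by positivity), inv_mul_eq_div, le_div_iff₀ hε']
  nlinarith [sq_abs ε, sq_abs s, sq_nonneg (|s| - |ε|), sq_nonneg s]

lemma continuous_poissonLine (hε : ε ≠ 0) : Continuous (poissonLine ε) :=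
  continuous_const.div (by fun_prop) fun s ↦ by positivity

lemma continuous_conjPoissonLine (hε : ε ≠ 0) : Continuous (conjPoissonLine ε) :=
  continuous_id.div (by fun_prop) fun s ↦ by positivity

lemma poissonLine_neg (ε s : ℝ) : poissonLine (-ε) s = -poissonLine ε s := by
  simp only [poissonLine, neg_sq, neg_div]

lemma conjPoissonLine_neg_height (ε s : ℝ) : conjPoissonLine (-ε) s = conjPoissonLine ε s := by
  simp only [conjPoissonLine, neg_sq]

lemma conjPoissonLine_neg (ε s : ℝ) : conjPoissonLine ε (-s) = -conjPoissonLine ε s := by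
  simp only [conjPoissonLine, neg_sq, neg_div]

lemma mul_conjPoissonLine (hε : ε ≠ 0) (s : ℝ) :
    s * conjPoissonLine ε s = 1 - ε * poissonLine ε s := by
  have : s ^ 2 + ε ^ 2 ≠ 0 := by positivity
  unfold conjPoissonLine poissonLine
  field_simp
  ring

lemma inv_sub_eq_conjPoissonLine_add_poissonLine (x t ε : ℝ) :
    ((x : ℂ) - (t + ε * Complex.I))⁻¹
      = conjPoissonLine ε (x - t) + poissonLine ε (x - t) * Complex.I := by
  apply Complex.ext <;> simp [Complex.inv_re, Complex.inv_im, Complex.normSq_apply] <;>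
    simp only [conjPoissonLine, poissonLine, sq]

lemma poissonLine_eq_inv_mul (hε : ε ≠ 0) (s : ℝ) :
    poissonLine ε s = ε⁻¹ * (1 + (ε⁻¹ * s) ^ 2)⁻¹ := by
  have : s ^ 2 + ε ^ 2 ≠ 0 := by positivity
  unfold poissonLine
  field_simp
  ring

lemma integrable_poissonLine (hε : 0 < ε) : Integrable (poissonLine ε) := by
  exact ((integrable_inv_one_add_sq.comp_mul_left' (inv_ne_zero hε.ne')).const_mul ε⁻¹).congr
    (.of_forall fun s ↦ (poissonLine_eq_inv_mul hε.ne' s).symm)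

lemma integral_poissonLine (hε : 0 < ε) : ∫ s, poissonLine ε s = Real.pi := by
  simp_rw [poissonLine_eq_inv_mul hε.ne', integral_const_mul]
  rw [Measure.integral_comp_mul_left (fun u : ℝ ↦ (1 + u ^ 2)⁻¹), integral_univ_inv_one_add_sq,
    inv_inv, abs_of_pos hε, smul_eq_mul, inv_mul_cancel_left₀ hε.ne']

end Kernels

section Integrals

variable {E : Type*} [NormedAddCommGroup E] [NormedSpace ℝ E]
  {μ : Measure ℝ} {ε : ℝ} {f g : ℝ → E}

/-- The Poisson integral of `f dμ` at the point `t + iε`, without the factor `1 / π`. -/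
def poissonIntegral (μ : Measure ℝ) (ε : ℝ) (f : ℝ → E) (t : ℝ) : E :=
  ∫ x, poissonLine ε (x - t) • f x ∂μ

/-- The conjugate Poisson integral of `f dμ` at the point `t + iε`, without the factor `1 / π`. -/
def conjPoissonIntegral (μ : Measure ℝ) (ε : ℝ) (f : ℝ → E) (t : ℝ) : E :=
  ∫ x, conjPoissonLine ε (x - t) • f x ∂μ

/-- The Cauchy transform `z ↦ ∫ f(x) / (x - z) dμ(x)` of the complex measure `f dμ`. -/
def cauchyTransform (μ : Measure ℝ) (f : ℝ → ℂ) (z : ℂ) : ℂ := ∫ x, f x / (x - z) ∂μ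

lemma integrable_comp_sub_right_smul {k : ℝ → ℝ} {C : ℝ} (hk : Continuous k)
    (hkC : ∀ s, |k s| ≤ C) (hf : Integrable f μ) (t : ℝ) :
    Integrable (fun x ↦ k (x - t) • f x) μ :=
  hf.bdd_smul C (hk.comp (continuous_sub_right t)).aestronglyMeasurable
    (.of_forall fun x ↦ hkC (x - t))

lemma continuous_integral_comp_sub_right_smul {k : ℝ → ℝ} {C : ℝ} (hk : Continuous k)
    (hkC : ∀ s, |k s| ≤ C) (hf : Integrable f μ) :
    Continuous fun t ↦ ∫ x, k (x - t) • f x ∂μ := by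
  refine continuous_of_dominated (bound := fun x ↦ C * ‖f x‖)
    (fun t ↦ (integrable_comp_sub_right_smul hk hkC hf t).aestronglyMeasurable)
    (fun t ↦ .of_forall fun x ↦ ?_) (hf.norm.const_mul _) (.of_forall fun x ↦ ?_)
  · rw [norm_smul]
    exact mul_le_mul_of_nonneg_right (hkC (x - t)) (norm_nonneg _)
  · exact (hk.comp (by fun_prop)).smul continuous_const

lemma integrable_poissonLine_smul (hf : Integrable f μ) (hε : ε ≠ 0) (t : ℝ) :
    Integrable (fun x ↦ poissonLine ε (x - t) • f x) μ :=
  integrable_comp_sub_right_smul (continuous_poissonLine hε) (abs_poissonLine_le hε) hf t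

lemma integrable_conjPoissonLine_smul (hf : Integrable f μ) (hε : ε ≠ 0) (t : ℝ) :
    Integrable (fun x ↦ conjPoissonLine ε (x - t) • f x) μ :=
  integrable_comp_sub_right_smul (continuous_conjPoissonLine hε) (abs_conjPoissonLine_le hε) hf t

lemma continuous_poissonIntegral (hf : Integrable f μ) (hε : ε ≠ 0) :
    Continuous (poissonIntegral μ ε f) :=
  continuous_integral_comp_sub_right_smul (continuous_poissonLine hε) (abs_poissonLine_le hε) hf

lemma continuous_conjPoissonIntegral (hf : Integrable f μ) (hε : ε ≠ 0) :
    Continuous (conjPoissonIntegral μ ε f) :=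
  continuous_integral_comp_sub_right_smul (continuous_conjPoissonLine hε)
    (abs_conjPoissonLine_le hε) hf

lemma conjPoissonIntegral_add (hf : Integrable f μ) (hg : Integrable g μ) (hε : ε ≠ 0) :
    conjPoissonIntegral μ ε (f + g)
      = conjPoissonIntegral μ ε f + conjPoissonIntegral μ ε g := by
  funext t
  simp only [conjPoissonIntegral, Pi.add_apply, smul_add]
  exact integral_add (integrable_conjPoissonLine_smul hf hε t)
    (integrable_conjPoissonLine_smul hg hε t)

lemma conjPoissonIntegral_sub (hf : Integrable f μ) (hg : Integrable g μ) (hε : ε ≠ 0) :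
    conjPoissonIntegral μ ε (f - g)
      = conjPoissonIntegral μ ε f - conjPoissonIntegral μ ε g := by
  funext t
  simp only [conjPoissonIntegral, Pi.sub_apply, smul_sub]
  exact integral_sub (integrable_conjPoissonLine_smul hf hε t)
    (integrable_conjPoissonLine_smul hg hε t)

lemma conjPoissonIntegral_smul {𝕜 : Type*} [NormedField 𝕜] [NormedSpace 𝕜 E] [SMulCommClass ℝ 𝕜 E]
    (c : 𝕜) (f : ℝ → E) : conjPoissonIntegral μ ε (c • f) = c • conjPoissonIntegral μ ε f := by
  funext t
  simp only [conjPoissonIntegral, Pi.smul_apply, smul_comm _ c, integral_smul]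

lemma poissonIntegral_ofReal (f : ℝ → ℝ) (t : ℝ) :
    poissonIntegral μ ε (fun x ↦ (f x : ℂ)) t = (poissonIntegral μ ε f t : ℝ) := by
  simp only [poissonIntegral, Complex.real_smul, smul_eq_mul, ← Complex.ofReal_mul,
    integral_complex_ofReal]

lemma conjPoissonIntegral_ofReal (f : ℝ → ℝ) (t : ℝ) :
    conjPoissonIntegral μ ε (fun x ↦ (f x : ℂ)) t = (conjPoissonIntegral μ ε f t : ℝ) := by
  simp only [conjPoissonIntegral, Complex.real_smul, smul_eq_mul, ← Complex.ofReal_mul,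
    integral_complex_ofReal]

lemma cauchyTransform_eq {f : ℝ → ℂ} (hf : Integrable f μ) (hε : ε ≠ 0) (t : ℝ) :
    cauchyTransform μ f (t + ε * Complex.I)
      = conjPoissonIntegral μ ε f t + poissonIntegral μ ε f t * Complex.I := by
  rw [conjPoissonIntegral, poissonIntegral, ← integral_mul_const,
    ← integral_add (integrable_conjPoissonLine_smul hf hε t)
      ((integrable_poissonLine_smul hf hε t).mul_const _)]
  refine integral_congr_ae (.of_forall fun x ↦ ?_)
  simp only [div_eq_mul_inv, inv_sub_eq_conjPoissonLine_add_poissonLine, Complex.real_smul]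
  ring

lemma cauchyTransform_conj_eq {f : ℝ → ℂ} (hf : Integrable f μ) (hε : ε ≠ 0) (t : ℝ) :
    cauchyTransform μ f (t - ε * Complex.I)
      = conjPoissonIntegral μ ε f t - poissonIntegral μ ε f t * Complex.I := by
  have h := cauchyTransform_eq hf (neg_ne_zero.2 hε) t
  simp only [poissonIntegral, conjPoissonIntegral, poissonLine_neg, conjPoissonLine_neg_height,
    neg_smul, integral_neg] at h ⊢
  simpa [sub_eq_add_neg] using h

end Integrals

section CauchyTransform

variable {μ : Measure ℝ} {f : ℝ → ℂ} {z : ℂ}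

lemma ofReal_sub_ne_zero {z : ℂ} (hz : z.im ≠ 0) (x : ℝ) : (x : ℂ) - z ≠ 0 :=
  fun h ↦ hz (by simp [← sub_eq_zero.1 h])

lemma norm_inv_ofReal_sub_le (hz : z.im ≠ 0) (x : ℝ) : ‖((x : ℂ) - z)⁻¹‖ ≤ |z.im|⁻¹ := by
  rw [norm_inv]
  refine inv_anti₀ (abs_pos.2 hz) ?_
  simpa using Complex.abs_im_le_norm ((x : ℂ) - z)

lemma continuous_inv_ofReal_sub (hz : z.im ≠ 0) : Continuous fun x : ℝ ↦ ((x : ℂ) - z)⁻¹ :=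
  Continuous.inv₀ (by fun_prop) (ofReal_sub_ne_zero hz)

lemma integrable_div_ofReal_sub (hf : Integrable f μ) (hz : z.im ≠ 0) :
    Integrable (fun x : ℝ ↦ f x / (x - z)) μ := by
  simp_rw [div_eq_mul_inv]
  exact hf.mul_bdd (continuous_inv_ofReal_sub hz).aestronglyMeasurable
    (.of_forall (norm_inv_ofReal_sub_le hz))

lemma hasDerivAt_div_ofReal_sub (c : ℂ) (hz : z.im ≠ 0) (x : ℝ) :
    HasDerivAt (fun w ↦ c / (x - w)) (c * ((x - z)⁻¹) ^ 2) z := by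
  have h := ((hasDerivAt_id z).const_sub (x : ℂ)).inv (ofReal_sub_ne_zero hz x)
  simpa [div_eq_mul_inv] using h.const_mul c

lemma differentiableAt_cauchyTransform (hf : Integrable f μ) (hz : z.im ≠ 0) :
    DifferentiableAt ℂ (cauchyTransform μ f) z := by
  have hz' : 0 < |z.im| / 2 := half_pos (abs_pos.2 hz)
  have him : ∀ w ∈ Metric.ball z (|z.im| / 2), |z.im| / 2 ≤ |w.im| := fun w hw ↦ by
    have h₁ := Complex.abs_im_le_norm (z - w)
    have h₂ := abs_sub_abs_le_abs_sub z.im w.im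
    rw [Metric.mem_ball, dist_comm, dist_eq_norm] at hw
    rw [Complex.sub_im] at h₁
    linarith
  have hne : ∀ w ∈ Metric.ball z (|z.im| / 2), w.im ≠ 0 := fun w hw ↦
    abs_pos.1 (hz'.trans_le (him w hw))
  refine (hasDerivAt_integral_of_dominated_loc_of_deriv_le
    (F' := fun w x ↦ f x * ((x - w)⁻¹) ^ 2) (bound := fun x ↦ ‖f x‖ * ((|z.im| / 2)⁻¹) ^ 2)
    (Metric.ball_mem_nhds z hz') ?_ (integrable_div_ofReal_sub hf hz)
    (hf.1.mul ((continuous_inv_ofReal_sub hz).pow 2).aestronglyMeasurable)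
    (.of_forall fun x w hw ↦ ?_) (hf.norm.mul_const _)
    (.of_forall fun x w hw ↦ hasDerivAt_div_ofReal_sub (f x) (hne w hw) x)).2.differentiableAt
  · filter_upwards [Metric.ball_mem_nhds z hz'] with w hw
    exact (integrable_div_ofReal_sub hf (hne w hw)).1
  · rw [norm_mul, norm_pow]
    gcongr
    exact (norm_inv_ofReal_sub_le (hne w hw) x).trans (inv_anti₀ hz' (him w hw))

end CauchyTransform

section Semicircle

instance : IsFiniteMeasure μI := by unfold μI; infer_instance

instance : NullSingletonClass μI := inferInstanceAs (NullSingletonClass (volume.restrict _))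

lemma integral_μI_eq_intervalIntegral (f : ℝ → ℂ) : ∫ x, f x ∂μI = ∫ x in (-1 : ℝ)..1, f x := by
  rw [intervalIntegral.integral_of_le (by norm_num), integral_Ioc_eq_integral_Ioo, μI]

lemma integrable_μI_of_continuous {E : Type*} [NormedAddCommGroup E] {f : ℝ → E}
    (hf : Continuous f) : Integrable f μI :=
  (hf.continuousOn.integrableOn_compact isCompact_Icc).mono_set Ioo_subset_Icc_self

/-- The weight `x ↦ √(1 - x²)`, extended by zero outside `[-1, 1]`. -/
def semicircle (x : ℝ) : ℝ := √(1 - x ^ 2)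

/-- The branch `z + (1 / π) ∫ √(1 - x²) / (x - z) dx` of `√(z² - 1)` on the plane slit along
`[-1, 1]`, which is asymptotic to `z` at infinity. -/
def sqrtSqSubOne (z : ℂ) : ℂ := z + cauchyTransform μI (fun x ↦ semicircle x) z / Real.pi

lemma continuous_semicircle : Continuous semicircle := by unfold semicircle; fun_prop

lemma integrable_ofReal_semicircle : Integrable (fun x ↦ (semicircle x : ℂ)) μI :=
  integrable_μI_of_continuous (Complex.continuous_ofReal.comp continuous_semicircle)

lemma semicircle_pos {x : ℝ} (hx : x ∈ Ioo (-1 : ℝ) 1) : 0 < semicircle x :=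
  Real.sqrt_pos.2 (by nlinarith [hx.1, hx.2])

lemma semicircle_cos {θ : ℝ} (hθ : θ ∈ Icc 0 Real.pi) :
    semicircle (Real.cos θ) = Real.sin θ := by
  rw [semicircle, ← Real.sin_sq, Real.sqrt_sq (Real.sin_nonneg_of_mem_Icc hθ)]

lemma exists_joukowski_eq {z : ℂ} (hz : z.im ≠ 0) :
    ∃ ζ : ℂ, ‖ζ‖ < 1 ∧ ζ ≠ 0 ∧ ζ ^ 2 + 1 = 2 * z * ζ := by
  obtain ⟨s, hs⟩ := IsAlgClosed.exists_pow_nat_eq (z ^ 2 - 1) (n := 2) two_pos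
  set ζ := z - s
  have hζ : ζ ^ 2 + 1 = 2 * z * ζ := by linear_combination hs
  have hζ0 : ζ ≠ 0 := fun h ↦ by simp [h] at hζ
  have hz_eq : 2 * z = ζ + ζ⁻¹ := by field_simp; linear_combination -hζ
  have hnorm : ‖ζ‖ ≠ 1 := fun h ↦ hz <| by
    have := congrArg Complex.im hz_eq
    simpa [Complex.inv_eq_conj h] using this
  rcases lt_or_gt_of_ne hnorm with h | h
  · exact ⟨ζ, h, hζ0, hζ⟩
  · refine ⟨ζ⁻¹, ?_, inv_ne_zero hζ0, ?_⟩
    · rw [norm_inv]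
      exact inv_lt_one_of_one_lt₀ h
    · rw [hz_eq]
      field_simp
      ring

lemma one_sub_mul_ne_zero {ζ u : ℂ} (hζ : ‖ζ‖ < 1) (hu : ‖u‖ ≤ 1) : 1 - ζ * u ≠ 0 := by
  intro h
  have : ‖ζ * u‖ = 1 := by rw [← sub_eq_zero.1 h, norm_one]
  rw [norm_mul] at this
  nlinarith [norm_nonneg ζ, norm_nonneg u]

/-- The Möbius map `u ↦ (u - ζ) / (1 - ζ u)` at the point `u = exp (iθ)` of the unit circle. -/
def moebiusCircle (ζ : ℂ) (θ : ℝ) : ℂ :=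
  (Complex.exp (θ * Complex.I) - ζ) / (1 - ζ * Complex.exp (θ * Complex.I))

lemma continuous_moebiusCircle {ζ : ℂ} (hζ : ‖ζ‖ < 1) : Continuous (moebiusCircle ζ) :=
  Continuous.div (by fun_prop) (by fun_prop) fun θ ↦
    one_sub_mul_ne_zero hζ (Complex.norm_exp_ofReal_mul_I θ).le

lemma integral_moebiusCircle {ζ : ℂ} (hζ : ‖ζ‖ < 1) :
    ∫ θ in -Real.pi..Real.pi, moebiusCircle ζ θ = -(2 * Real.pi * ζ) := by
  have hdiff : DiffContOnCl ℂ (fun u ↦ (u - ζ) / (1 - ζ * u)) (Metric.ball (0 : ℂ) |1|) := by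
    apply DifferentiableOn.diffContOnCl
    rw [abs_one, closure_ball _ one_ne_zero]
    intro u hu
    have hu' := one_sub_mul_ne_zero hζ (by simpa using hu)
    have hden : DifferentiableAt ℂ (fun u ↦ 1 - ζ * u) u := by fun_prop
    exact ((differentiableAt_id.sub_const ζ).fun_div hden hu').differentiableWithinAt
  have hmean : (2 * Real.pi)⁻¹ • ∫ θ in 0..2 * Real.pi, moebiusCircle ζ θ = -ζ := by
    simpa [Real.circleAverage_def, circleMap, moebiusCircle] using hdiff.circleAverage
  have hper : Function.Periodic (moebiusCircle ζ) (2 * Real.pi) := fun θ ↦ by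
    have := Complex.exp_periodic (θ * Complex.I)
    simp only [moebiusCircle, Complex.ofReal_add, add_mul] at this ⊢
    push_cast
    rw [this]
  have hshift := hper.intervalIntegral_add_eq (-Real.pi) 0
  rw [zero_add, show -Real.pi + 2 * Real.pi = Real.pi by ring] at hshift
  rw [inv_smul_eq_iff₀ (by positivity)] at hmean
  rw [hshift, hmean, Complex.real_smul]
  push_cast
  ring

lemma one_sub_sq_div_sub_eq_moebius {u v z ζ : ℂ} (huv : u * v = 1) (hu : 1 - ζ * u ≠ 0)
    (hv : 1 - ζ * v ≠ 0) (h : ζ ^ 2 + 1 = 2 * z * ζ) :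
    (1 - ((u + v) / 2) ^ 2) / ((u + v) / 2 - z)
      = ((u - ζ) / (1 - ζ * u) + (v - ζ) / (1 - ζ * v)) / 2 - (u + v) / 2 := by
  have hden : -2 * ζ * ((u + v) / 2 - z) = (1 - ζ * u) * (1 - ζ * v) := by
    linear_combination -h - ζ ^ 2 * huv
  have hζ : -2 * ζ ≠ 0 := left_ne_zero_of_mul (hden ▸ mul_ne_zero hu hv)
  rw [← mul_div_mul_left _ _ hζ, hden]
  field_simp
  linear_combination (2 * ζ + ζ ^ 2 * (u + v)) * huv

lemma sin_sq_div_cos_sub {z ζ : ℂ} (hζ : ‖ζ‖ < 1) (h : ζ ^ 2 + 1 = 2 * z * ζ)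
    (θ : ℝ) :
    (Real.sin θ : ℂ) ^ 2 / (Real.cos θ - z)
      = (moebiusCircle ζ θ + moebiusCircle ζ (-θ)) / 2 - Real.cos θ := by
  have hne (θ : ℝ) := one_sub_mul_ne_zero hζ (Complex.norm_exp_ofReal_mul_I θ).le
  have hcos : (Real.cos θ : ℂ)
      = (Complex.exp (θ * Complex.I) + Complex.exp ((-θ : ℝ) * Complex.I)) / 2 := by
    rw [Complex.ofReal_cos, Complex.cos, Complex.ofReal_neg]
  have hprod : Complex.exp (θ * Complex.I) * Complex.exp ((-θ : ℝ) * Complex.I) = 1 := by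
    rw [← Complex.exp_add, Complex.ofReal_neg, neg_mul, add_neg_cancel, Complex.exp_zero]
  have hsin : (Real.sin θ : ℂ) ^ 2 = 1 - (Real.cos θ : ℂ) ^ 2 := by
    exact_mod_cast Real.sin_sq θ
  rw [hcos] at hsin ⊢
  rw [hsin]
  exact one_sub_sq_div_sub_eq_moebius hprod (hne θ) (hne (-θ)) h

lemma cauchyTransform_semicircle_eq {z ζ : ℂ} (hz : z.im ≠ 0) (hζ : ‖ζ‖ < 1)
    (h : ζ ^ 2 + 1 = 2 * z * ζ) :
    cauchyTransform μI (fun x ↦ semicircle x) z = -(Real.pi * ζ) := by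
  have hB := continuous_moebiusCircle hζ
  have hcont : Continuous fun x : ℝ ↦ (semicircle x : ℂ) / (x - z) :=
    (Complex.continuous_ofReal.comp continuous_semicircle).div (by fun_prop)
      (ofReal_sub_ne_zero hz)
  have hcov := intervalIntegral.integral_deriv_smul_comp (a := 0) (b := Real.pi)
    (fun θ _ ↦ Real.hasDerivAt_cos θ) (by fun_prop) hcont
  rw [Real.cos_zero, Real.cos_pi, intervalIntegral.integral_symm (-1)] at hcov
  calc cauchyTransform μI (fun x ↦ semicircle x) z
      = ∫ θ in 0..Real.pi, (Real.sin θ : ℂ) ^ 2 / (Real.cos θ - z) := by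
        rw [cauchyTransform, integral_μI_eq_intervalIntegral, ← neg_inj, ← hcov,
          ← intervalIntegral.integral_neg]
        refine intervalIntegral.integral_congr fun θ hθ ↦ ?_
        rw [uIcc_of_le Real.pi_pos.le] at hθ
        simp only [Function.comp_apply, semicircle_cos hθ, Complex.real_smul]
        push_cast
        ring
    _ = ∫ θ in 0..Real.pi, ((moebiusCircle ζ θ + moebiusCircle ζ (-θ)) / 2
          - (Real.cos θ : ℂ)) := by
        simp only [sin_sq_div_cos_sub hζ h]
    _ = (∫ θ in -Real.pi..Real.pi, moebiusCircle ζ θ) / 2 := by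
        rw [intervalIntegral.integral_sub (Continuous.intervalIntegrable (by fun_prop) _ _)
          (Continuous.intervalIntegrable (by fun_prop) _ _), intervalIntegral.integral_div,
          intervalIntegral.integral_add (Continuous.intervalIntegrable (by fun_prop) _ _)
          (Continuous.intervalIntegrable (by fun_prop) _ _), intervalIntegral.integral_ofReal,
          integral_cos, intervalIntegral.integral_comp_neg, neg_zero, add_comm,
          intervalIntegral.integral_add_adjacent_intervals (hB.intervalIntegrable _ _)
          (hB.intervalIntegrable _ _)]
        simp
    _ = -(Real.pi * ζ) := by rw [integral_moebiusCircle hζ]; ring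

lemma norm_cauchyTransform_semicircle_le {z : ℂ} (hz : z.im ≠ 0) :
    ‖cauchyTransform μI (fun x ↦ semicircle x) z‖ ≤ Real.pi := by
  obtain ⟨ζ, hζ, -, h⟩ := exists_joukowski_eq hz
  rw [cauchyTransform_semicircle_eq hz hζ h, norm_neg, norm_mul, Complex.norm_real,
    Real.norm_of_nonneg Real.pi_pos.le]
  exact mul_le_of_le_one_right Real.pi_pos.le hζ.le

lemma sqrtSqSubOne_sq {z : ℂ} (hz : z.im ≠ 0) : sqrtSqSubOne z ^ 2 = z ^ 2 - 1 := by
  obtain ⟨ζ, hζ, -, h⟩ := exists_joukowski_eq hz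
  have hpi : (Real.pi : ℂ) ≠ 0 := Complex.ofReal_ne_zero.2 Real.pi_ne_zero
  rw [sqrtSqSubOne, cauchyTransform_semicircle_eq hz hζ h, neg_div, mul_div_cancel_left₀ _ hpi]
  linear_combination h

lemma sqrtSqSubOne_add (t : ℝ) {ε : ℝ} (hε : ε ≠ 0) :
    sqrtSqSubOne (t + ε * Complex.I)
      = ((t + conjPoissonIntegral μI ε semicircle t / Real.pi : ℝ) : ℂ)
        + ((ε + poissonIntegral μI ε semicircle t / Real.pi : ℝ) : ℂ) * Complex.I := by
  rw [sqrtSqSubOne, cauchyTransform_eq integrable_ofReal_semicircle hε,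
    conjPoissonIntegral_ofReal, poissonIntegral_ofReal]
  push_cast
  ring

lemma sqrtSqSubOne_sub (t : ℝ) {ε : ℝ} (hε : ε ≠ 0) :
    sqrtSqSubOne (t - ε * Complex.I)
      = ((t + conjPoissonIntegral μI ε semicircle t / Real.pi : ℝ) : ℂ)
        - ((ε + poissonIntegral μI ε semicircle t / Real.pi : ℝ) : ℂ) * Complex.I := by
  rw [sqrtSqSubOne, cauchyTransform_conj_eq integrable_ofReal_semicircle hε,
    conjPoissonIntegral_ofReal, poissonIntegral_ofReal]
  push_cast
  ring

lemma poissonIntegral_semicircle_nonneg {ε : ℝ} (hε : 0 ≤ ε) (t : ℝ) :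
    0 ≤ poissonIntegral μI ε semicircle t :=
  integral_nonneg fun _ ↦ mul_nonneg (poissonLine_nonneg hε _) (Real.sqrt_nonneg _)

-- As `R² = z² - 1` for `R = sqrtSqSubOne z`, the product `(R - i w) (R + i w)` tends to `0`, while
-- `R + i w` stays away from `0` because `R` lies in the upper half-plane.
lemma tendsto_sqrtSqSubOne {t : ℝ} (ht : t ∈ Ioo (-1 : ℝ) 1) :
    Tendsto (fun ε : ℝ ↦ sqrtSqSubOne (t + ε * Complex.I)) (𝓝[>] 0)
      (𝓝 (semicircle t * Complex.I)) := by
  have hw := semicircle_pos ht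
  have hwsq : (semicircle t : ℂ) ^ 2 = 1 - (t : ℂ) ^ 2 := by
    exact_mod_cast Real.sq_sqrt (by nlinarith [ht.1, ht.2] : 0 ≤ 1 - t ^ 2)
  have hbound : Tendsto (fun ε : ℝ ↦ ‖((t : ℂ) + ε * Complex.I) ^ 2 - t ^ 2‖ / semicircle t)
      (𝓝[>] 0) (𝓝 0) := by
    have hcont : Continuous fun ε : ℝ ↦
      ‖((t : ℂ) + ε * Complex.I) ^ 2 - t ^ 2‖ / semicircle t := by fun_prop
    simpa using (hcont.tendsto 0).mono_left nhdsWithin_le_nhds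
  rw [tendsto_iff_norm_sub_tendsto_zero]
  refine squeeze_zero' (.of_forall fun _ ↦ norm_nonneg _) ?_ hbound
  filter_upwards [self_mem_nhdsWithin] with ε (hε : 0 < ε)
  have hsq := sqrtSqSubOne_sq (z := t + ε * Complex.I) (by simpa using hε.ne')
  have him : 0 ≤ (sqrtSqSubOne (t + ε * Complex.I)).im := by
    have := poissonIntegral_semicircle_nonneg hε.le t
    rw [sqrtSqSubOne_add t hε.ne', Complex.add_im, Complex.ofReal_im, Complex.im_ofReal_mul,
      Complex.I_im]
    positivity
  set R := sqrtSqSubOne (t + ε * Complex.I)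
  have hfar : semicircle t ≤ ‖R + semicircle t * Complex.I‖ := by
    refine le_trans ?_ ((le_abs_self _).trans (Complex.abs_im_le_norm _))
    simpa using him
  rw [le_div_iff₀ hw]
  calc ‖R - semicircle t * Complex.I‖ * semicircle t
      ≤ ‖R - semicircle t * Complex.I‖ * ‖R + semicircle t * Complex.I‖ := by gcongr
    _ = ‖((t : ℂ) + ε * Complex.I) ^ 2 - t ^ 2‖ := by
        rw [← norm_mul]
        congr 1
        linear_combination hsq - (semicircle t : ℂ) ^ 2 * Complex.I_sq + hwsq

end Semicircle

section ExponentialBound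

variable {E : Type*} [NormedAddCommGroup E] [NormedSpace ℝ E] {μ : Measure ℝ} {ε C : ℝ}

lemma μI_le_volume : μI ≤ volume := Measure.restrict_le_self

lemma measureReal_μI : μI.real univ = 2 := by
  rw [μI, measureReal_restrict_apply .univ, univ_inter, Real.volume_real_Ioo]
  norm_num

lemma ae_μI_of_forall {p : ℝ → Prop} (h : ∀ x ∈ Ioo (-1 : ℝ) 1, p x) : ∀ᵐ x ∂μI, p x :=
  ae_restrict_of_forall_mem measurableSet_Ioo h

lemma norm_poissonIntegral_le (hμ : μ ≤ volume) (hε : 0 < ε) {f : ℝ → E} (hf : ∀ x, ‖f x‖ ≤ C)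
    (t : ℝ) : ‖poissonIntegral μ ε f t‖ ≤ Real.pi * C := by
  have hC : 0 ≤ C := (norm_nonneg _).trans (hf 0)
  have hint : Integrable fun x ↦ poissonLine ε (x - t) * C :=
    ((integrable_poissonLine hε).comp_sub_right t).mul_const C
  calc ‖poissonIntegral μ ε f t‖ ≤ ∫ x, poissonLine ε (x - t) * C ∂μ := by
        refine norm_integral_le_of_norm_le (hint.mono_measure hμ) (.of_forall fun x ↦ ?_)
        rw [norm_smul, Real.norm_of_nonneg (poissonLine_nonneg hε.le _)]
        exact mul_le_mul_of_nonneg_left (hf x) (poissonLine_nonneg hε.le _)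
    _ ≤ ∫ x, poissonLine ε (x - t) * C := integral_mono_measure hμ
        (.of_forall fun x ↦ mul_nonneg (poissonLine_nonneg hε.le _) hC) hint
    _ = Real.pi * C := by
        rw [integral_mul_const, integral_sub_right_eq_self (poissonLine ε), integral_poissonLine hε]

lemma norm_cauchyTransform_le [IsFiniteMeasure μ] {f : ℝ → ℂ} (hf : ∀ x, ‖f x‖ ≤ C) {z : ℂ}
    (hz : ∀ᵐ x : ℝ ∂μ, 1 ≤ ‖(x : ℂ) - z‖) : ‖cauchyTransform μ f z‖ ≤ C * μ.real univ := by
  refine norm_integral_le_of_norm_le_const ?_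
  filter_upwards [hz] with x hx
  rw [norm_div]
  exact (div_le_self (norm_nonneg _) hx).trans (hf x)

lemma continuous_cauchyTransform_line {f : ℝ → ℂ} (hf : Integrable f μ) (hε : ε ≠ 0) :
    Continuous fun t : ℝ ↦ cauchyTransform μ f (t + ε * Complex.I) :=
  continuous_iff_continuousAt.2 fun t ↦ ContinuousAt.comp (g := cauchyTransform μ f)
    (differentiableAt_cauchyTransform hf (by simpa using hε)).continuousAt (by fun_prop)

lemma norm_integral_bottom_le {F : Type*} [NormedAddCommGroup F] [NormedSpace ℂ F]
    {Φ : ℂ → F} {a b c d M : ℝ} (hab : a ≤ b) (hcd : c ≤ d)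
    (hΦ : DifferentiableOn ℂ Φ (Icc a b ×ℂ Icc c d))
    (htop : ∀ x : ℝ, ‖Φ (x + d * Complex.I)‖ ≤ M)
    (hleft : ∀ y : ℝ, ‖Φ (a + y * Complex.I)‖ ≤ M)
    (hright : ∀ y : ℝ, ‖Φ (b + y * Complex.I)‖ ≤ M) :
    ‖∫ x in a..b, Φ (x + c * Complex.I)‖ ≤ M * (b - a + 2 * (d - c)) := by
  have hrect := Complex.integral_boundary_rect_eq_zero_of_differentiableOn Φ ⟨a, c⟩ ⟨b, d⟩
    (by rwa [uIcc_of_le hab, uIcc_of_le hcd])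
  have hbottom : ∫ x in a..b, Φ (x + c * Complex.I)
      = (∫ x in a..b, Φ (x + d * Complex.I))
        - Complex.I • (∫ y in c..d, Φ (b + y * Complex.I))
        + Complex.I • ∫ y in c..d, Φ (a + y * Complex.I) := by
    rw [← sub_eq_zero, ← hrect]
    abel
  have hT := intervalIntegral.norm_integral_le_of_norm_le_const (a := a) (b := b)
    fun x _ ↦ htop x
  have hL := intervalIntegral.norm_integral_le_of_norm_le_const (a := c) (b := d)
    fun y _ ↦ hleft y
  have hR := intervalIntegral.norm_integral_le_of_norm_le_const (a := c) (b := d)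
    fun y _ ↦ hright y
  rw [abs_of_nonneg (sub_nonneg.2 hab)] at hT
  rw [abs_of_nonneg (sub_nonneg.2 hcd)] at hL hR
  rw [hbottom]
  refine (norm_add_le _ _).trans ((add_le_add_left (norm_sub_le _ _) _).trans ?_)
  rw [norm_smul, norm_smul, Complex.norm_I, one_mul, one_mul]
  linarith

lemma norm_exp_cauchyTransform_div_pi_le {f : ℝ → ℂ} (hf : ∀ x, ‖f x‖ ≤ 1) {z : ℂ}
    (hz : ∀ x ∈ Ioo (-1 : ℝ) 1, 1 ≤ ‖(x : ℂ) - z‖) :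
    ‖Complex.exp (cauchyTransform μI f z / Real.pi)‖ ≤ Real.exp 1 := by
  refine (Complex.norm_exp_le_exp_norm _).trans (Real.exp_le_exp.2 ?_)
  have h := norm_cauchyTransform_le hf (ae_μI_of_forall hz)
  rw [measureReal_μI] at h
  rw [norm_div, Complex.norm_real, Real.norm_of_nonneg Real.pi_pos.le, div_le_one Real.pi_pos]
  linarith [Real.pi_gt_three]

lemma norm_integral_exp_cauchyTransform_le (hε : 0 < ε) {f : ℝ → ℂ} (hfi : Integrable f μI)
    (hf : ∀ x, ‖f x‖ ≤ 1) :
    ‖∫ x in (-2)..2, Complex.exp (cauchyTransform μI f (x + ε * Complex.I) / Real.pi)‖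
      ≤ 6 * Real.exp 1 := by
  have hdiff : DifferentiableOn ℂ (fun z ↦ Complex.exp (cauchyTransform μI f z / Real.pi))
      (Icc (-2) 2 ×ℂ Icc ε (ε + 1)) := fun z hz ↦
    ((differentiableAt_cauchyTransform hfi
      (hε.trans_le (Complex.mem_reProdIm.1 hz).2.1).ne').div_const _).cexp.differentiableWithinAt
  refine (norm_integral_bottom_le (M := Real.exp 1) (by norm_num) (by linarith) hdiff
    (fun x ↦ norm_exp_cauchyTransform_div_pi_le hf fun y _ ↦ ?_)
    (fun s ↦ norm_exp_cauchyTransform_div_pi_le hf fun y hy ↦ ?_)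
    (fun s ↦ norm_exp_cauchyTransform_div_pi_le hf fun y hy ↦ ?_)).trans_eq (by ring)
  · refine le_trans ?_ (Complex.abs_im_le_norm _)
    rw [le_abs]
    right
    simpa using hε.le
  · refine le_trans ?_ (Complex.abs_re_le_norm _)
    rw [le_abs]
    left
    simp
    linarith [hy.1]
  · refine le_trans ?_ (Complex.abs_re_le_norm _)
    rw [le_abs]
    right
    simp
    linarith [hy.2]

lemma re_exp_cauchyTransform_div_pi (hε : ε ≠ 0) {ψ : ℝ → ℝ} (hψ : Integrable ψ μ) (t : ℝ) :
    (Complex.exp (cauchyTransform μ (fun x ↦ ψ x) (t + ε * Complex.I) / Real.pi)).re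
      = Real.exp (conjPoissonIntegral μ ε ψ t / Real.pi)
        * Real.cos (poissonIntegral μ ε ψ t / Real.pi) := by
  rw [cauchyTransform_eq (f := fun x ↦ (ψ x : ℂ)) hψ.ofReal hε,
    conjPoissonIntegral_ofReal, poissonIntegral_ofReal, Complex.exp_re, add_div,
    mul_div_right_comm, ← Complex.ofReal_div, ← Complex.ofReal_div]
  simp

lemma cos_one_le_cos_poissonIntegral (hμ : μ ≤ volume) (hε : 0 < ε) {ψ : ℝ → ℝ}
    (hψ : ∀ x, ‖ψ x‖ ≤ 1) (t : ℝ) :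
    Real.cos 1 ≤ Real.cos (poissonIntegral μ ε ψ t / Real.pi) := by
  have h : |poissonIntegral μ ε ψ t / Real.pi| ≤ 1 := by
    rw [abs_div, abs_of_pos Real.pi_pos, div_le_one Real.pi_pos]
    simpa using norm_poissonIntegral_le hμ hε hψ t
  rw [← Real.cos_abs (poissonIntegral μ ε ψ t / Real.pi)]
  exact Real.cos_le_cos_of_nonneg_of_le_pi (abs_nonneg _) (by linarith [Real.pi_gt_three]) h

-- With `F = exp (Cψ / π)` holomorphic, `∫ Re F(x + iε) dx` is bounded by Cauchy's theorem, and
-- `Re F = exp (Qψ / π) cos (Pψ / π)` where `|Pψ / π| ≤ 1`.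
lemma integral_exp_conjPoissonIntegral_le (hε : 0 < ε) {ψ : ℝ → ℝ} (hψi : Integrable ψ μI)
    (hψ : ∀ x, ‖ψ x‖ ≤ 1) :
    ∫ t, Real.exp (conjPoissonIntegral μI ε ψ t / Real.pi) ∂μI ≤ 6 * Real.exp 1 / Real.cos 1 := by
  have hQ := continuous_conjPoissonIntegral hψi hε.ne'
  have hC : Continuous fun x : ℝ ↦
      Complex.exp (cauchyTransform μI (fun x ↦ ψ x) (x + ε * Complex.I) / Real.pi) :=
    ((continuous_cauchyTransform_line hψi.ofReal hε.ne').div_const _).cexp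
  have hexp : Continuous fun x ↦
      Real.exp (conjPoissonIntegral μI ε ψ x / Real.pi) * Real.cos 1 := by fun_prop
  rw [le_div_iff₀ Real.cos_one_pos]
  calc (∫ t, Real.exp (conjPoissonIntegral μI ε ψ t / Real.pi) ∂μI) * Real.cos 1
      = ∫ t in Ioo (-1) 1, Real.exp (conjPoissonIntegral μI ε ψ t / Real.pi) * Real.cos 1 := by
        rw [← integral_mul_const, μI]
    _ ≤ ∫ t in (-2)..2, Real.exp (conjPoissonIntegral μI ε ψ t / Real.pi) * Real.cos 1 := by
        rw [intervalIntegral.integral_of_le (by norm_num)]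
        exact setIntegral_mono_set (hexp.integrableOn_Ioc)
          (.of_forall fun x ↦ mul_nonneg (Real.exp_pos _).le Real.cos_one_pos.le)
          (.of_forall fun x hx ↦ ⟨by linarith [hx.1], by linarith [hx.2]⟩)
    _ ≤ ∫ t in (-2)..2,
          (Complex.exp (cauchyTransform μI (fun x ↦ ψ x) (t + ε * Complex.I) / Real.pi)).re := by
        refine intervalIntegral.integral_mono (by norm_num) (hexp.intervalIntegrable _ _)
          ((Complex.continuous_re.comp hC).intervalIntegrable _ _) fun x ↦ ?_
        rw [re_exp_cauchyTransform_div_pi hε.ne' hψi]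
        exact mul_le_mul_of_nonneg_left (cos_one_le_cos_poissonIntegral μI_le_volume hε hψ x)
          (Real.exp_pos _).le
    _ = (∫ t in (-2)..2,
          Complex.exp (cauchyTransform μI (fun x ↦ ψ x) (t + ε * Complex.I) / Real.pi)).re :=
        Complex.reCLM.intervalIntegral_comp_comm (hC.intervalIntegrable _ _)
    _ ≤ 6 * Real.exp 1 := (Complex.re_le_norm _).trans
        (norm_integral_exp_cauchyTransform_le hε hψi.ofReal (by simpa using hψ))

end ExponentialBound

section Duality

variable {μ : Measure ℝ} {ε δ : ℝ}

lemma conjPoissonIntegral_re {f : ℝ → ℂ} (hf : Integrable f μ) (hε : ε ≠ 0) (t : ℝ) :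
    (conjPoissonIntegral μ ε f t).re = conjPoissonIntegral μ ε (fun x ↦ (f x).re) t := by
  simpa [conjPoissonIntegral] using
    (Complex.reCLM.integral_comp_comm (integrable_conjPoissonLine_smul hf hε t)).symm

lemma conjPoissonIntegral_im {f : ℝ → ℂ} (hf : Integrable f μ) (hε : ε ≠ 0) (t : ℝ) :
    (conjPoissonIntegral μ ε f t).im = conjPoissonIntegral μ ε (fun x ↦ (f x).im) t := by
  simpa [conjPoissonIntegral] using
    (Complex.imCLM.integral_comp_comm (integrable_conjPoissonLine_smul hf hε t)).symm

/-- The constant of the exponential bound `integral_exp_norm_conjPoissonIntegral_le` for conjugate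
Poisson integrals of complex functions bounded by one. -/
def expConst : ℝ := 12 * Real.exp 1 / Real.cos 1

lemma expConst_pos : 0 < expConst := by
  have := Real.cos_one_pos
  unfold expConst
  positivity

lemma integral_exp_abs_conjPoissonIntegral_le (hε : 0 < ε) {ψ : ℝ → ℝ} (hψi : Integrable ψ μI)
    (hψ : ∀ x, ‖ψ x‖ ≤ 1) :
    ∫ t, Real.exp (|conjPoissonIntegral μI ε ψ t| / Real.pi) ∂μI ≤ expConst := by
  have hQ := continuous_conjPoissonIntegral hψi hε.ne'
  have hneg : conjPoissonIntegral μI ε (-ψ) = -conjPoissonIntegral μI ε ψ := by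
    simpa using conjPoissonIntegral_smul (μ := μI) (ε := ε) (-1 : ℝ) ψ
  have h₁ := integral_exp_conjPoissonIntegral_le hε hψi hψ
  have h₂ := integral_exp_conjPoissonIntegral_le hε hψi.neg (by simpa using hψ)
  simp only [hneg, Pi.neg_apply] at h₂
  calc ∫ t, Real.exp (|conjPoissonIntegral μI ε ψ t| / Real.pi) ∂μI
      ≤ ∫ t, (Real.exp (conjPoissonIntegral μI ε ψ t / Real.pi)
          + Real.exp (-conjPoissonIntegral μI ε ψ t / Real.pi)) ∂μI := by
        refine integral_mono (integrable_μI_of_continuous (by fun_prop))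
          (integrable_μI_of_continuous (by fun_prop)) fun t ↦ ?_
        have := Real.exp_abs_le (conjPoissonIntegral μI ε ψ t / Real.pi)
        rwa [abs_div, abs_of_pos Real.pi_pos, ← neg_div] at this
    _ ≤ 6 * Real.exp 1 / Real.cos 1 + 6 * Real.exp 1 / Real.cos 1 := by
        rw [integral_add (integrable_μI_of_continuous (by fun_prop))
          (integrable_μI_of_continuous (by fun_prop))]
        exact add_le_add h₁ h₂
    _ = expConst := by rw [expConst]; ring

lemma exp_add_div_two_le (a b : ℝ) :
    Real.exp ((a + b) / 2) ≤ (Real.exp a + Real.exp b) / 2 := by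
  have h := convexOn_exp.2 (mem_univ a) (mem_univ b) (by norm_num : (0 : ℝ) ≤ 1 / 2)
    (by norm_num : (0 : ℝ) ≤ 1 / 2) (by norm_num)
  simp only [smul_eq_mul] at h
  rw [show (a + b) / 2 = 1 / 2 * a + 1 / 2 * b by ring]
  linarith

lemma integral_exp_norm_conjPoissonIntegral_le (hε : 0 < ε) {ψ : ℝ → ℂ} (hψi : Integrable ψ μI)
    (hψ : ∀ x, ‖ψ x‖ ≤ 1) :
    ∫ t, Real.exp (‖conjPoissonIntegral μI ε ψ t‖ / (2 * Real.pi)) ∂μI ≤ expConst := by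
  have hQ := continuous_conjPoissonIntegral hψi hε.ne'
  have hQre := continuous_conjPoissonIntegral hψi.re hε.ne'
  have hQim := continuous_conjPoissonIntegral hψi.im hε.ne'
  have hre := integral_exp_abs_conjPoissonIntegral_le hε hψi.re
    fun x ↦ (RCLike.norm_re_le_norm (ψ x)).trans (hψ x)
  have him := integral_exp_abs_conjPoissonIntegral_le hε hψi.im
    fun x ↦ (RCLike.norm_im_le_norm (ψ x)).trans (hψ x)
  set A := conjPoissonIntegral μI ε fun x ↦ RCLike.re (ψ x)
  set B := conjPoissonIntegral μI ε fun x ↦ RCLike.im (ψ x)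
  calc ∫ t, Real.exp (‖conjPoissonIntegral μI ε ψ t‖ / (2 * Real.pi)) ∂μI
      ≤ ∫ t, (Real.exp (|A t| / Real.pi) + Real.exp (|B t| / Real.pi)) / 2 ∂μI := by
        refine integral_mono (integrable_μI_of_continuous (by fun_prop))
          (integrable_μI_of_continuous (by fun_prop)) fun t ↦
            le_trans (Real.exp_le_exp.2 ?_) (exp_add_div_two_le _ _)
        have h := Complex.norm_le_abs_re_add_abs_im (conjPoissonIntegral μI ε ψ t)
        rw [conjPoissonIntegral_re hψi hε.ne', conjPoissonIntegral_im hψi hε.ne'] at h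
        rw [← add_div, div_div, mul_comm Real.pi]
        exact div_le_div_of_nonneg_right h (by positivity)
    _ ≤ (expConst + expConst) / 2 := by
        rw [integral_div, integral_add (integrable_μI_of_continuous (by fun_prop))
          (integrable_μI_of_continuous (by fun_prop))]
        linarith
    _ = expConst := add_self_div_two _

lemma integral_mul_conjPoissonIntegral [SFinite μ] (hε : ε ≠ 0) {f g : ℝ → ℂ}
    (hf : Integrable f μ) (hg : Integrable g μ) :
    ∫ t, g t * conjPoissonIntegral μ ε f t ∂μ = -∫ x, f x * conjPoissonIntegral μ ε g x ∂μ := by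
  have hint : Integrable (fun p : ℝ × ℝ ↦ conjPoissonLine ε (p.2 - p.1) • (g p.1 * f p.2))
      (μ.prod μ) :=
    (hg.mul_prod hf).bdd_smul |ε|⁻¹
      ((continuous_conjPoissonLine hε).comp (by fun_prop)).aestronglyMeasurable
      (.of_forall fun p ↦ abs_conjPoissonLine_le hε _)
  calc ∫ t, g t * conjPoissonIntegral μ ε f t ∂μ
      = ∫ t, ∫ x, conjPoissonLine ε (x - t) • (g t * f x) ∂μ ∂μ := by
        simp only [conjPoissonIntegral, ← integral_const_mul, mul_smul_comm]
    _ = ∫ x, ∫ t, conjPoissonLine ε (x - t) • (g t * f x) ∂μ ∂μ :=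
        integral_integral_swap hint
    _ = -∫ x, f x * conjPoissonIntegral μ ε g x ∂μ := by
        simp only [conjPoissonIntegral, ← integral_const_mul, ← integral_neg]
        refine integral_congr_ae (.of_forall fun x ↦ integral_congr_ae (.of_forall fun t ↦ ?_))
        simp only [← neg_sub t x, conjPoissonLine_neg, neg_smul, mul_smul_comm, mul_comm]

lemma exists_norm_le_one_mul_eq_norm {F : ℝ → ℂ} (hF : Continuous F) :
    ∃ ψ : ℝ → ℂ, (∀ t, ‖ψ t‖ ≤ 1) ∧ Integrable ψ μI ∧ ∀ t, ψ t * F t = ‖F t‖ := by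
  have hψ (t : ℝ) : ‖starRingEnd ℂ (F t) / ‖F t‖‖ ≤ 1 := by
    simp only [norm_div, RCLike.norm_conj, Complex.norm_real, norm_norm]
    exact div_self_le_one _
  refine ⟨fun t ↦ starRingEnd ℂ (F t) / ‖F t‖, hψ, .of_bound ?_ 1 (.of_forall hψ), fun t ↦ ?_⟩
  · exact ((Complex.continuous_conj.comp hF).measurable.div
      (Complex.continuous_ofReal.comp hF.norm).measurable).aestronglyMeasurable
  · rw [div_mul_eq_mul_div, mul_comm, Complex.mul_conj', sq, mul_self_div_self]

-- Dualize with the unimodular function `ψ = conj (Q h) / |Q h|`, for which `exp (|Q ψ| / 2π)` has a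
-- bounded integral.
lemma integral_norm_conjPoissonIntegral_le (hε : 0 < ε) (hδ : 0 ≤ δ) {h : ℝ → ℂ} {W : ℝ → ℝ}
    (hh : Integrable h μI) (hW : Integrable W μI)
    (hyoung : ∀ x q : ℝ, 0 ≤ q → ‖h x‖ * q ≤ W x + δ * Real.exp q) :
    ∫ t, ‖conjPoissonIntegral μI ε h t‖ ∂μI ≤ 2 * Real.pi * (∫ x, W x ∂μI + δ * expConst) := by
  obtain ⟨ψ, hψ, hψi, hdual⟩ :=
    exists_norm_le_one_mul_eq_norm (continuous_conjPoissonIntegral hh hε.ne')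
  set q : ℝ → ℝ := fun x ↦ ‖conjPoissonIntegral μI ε ψ x‖ / (2 * Real.pi)
  have hexp : Integrable (fun x ↦ Real.exp (q x)) μI := by
    have := continuous_conjPoissonIntegral hψi hε.ne'
    exact integrable_μI_of_continuous (by fun_prop)
  calc ∫ t, ‖conjPoissonIntegral μI ε h t‖ ∂μI
      ≤ ‖∫ t, ψ t * conjPoissonIntegral μI ε h t ∂μI‖ := by
        simp only [hdual, integral_complex_ofReal, Complex.norm_real]
        exact le_abs_self _
    _ = ‖∫ x, h x * conjPoissonIntegral μI ε ψ x ∂μI‖ := by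
        rw [integral_mul_conjPoissonIntegral hε.ne' hh hψi, norm_neg]
    _ ≤ ∫ x, 2 * Real.pi * (W x + δ * Real.exp (q x)) ∂μI := by
        refine norm_integral_le_of_norm_le ((hW.add (hexp.const_mul δ)).const_mul _)
          (.of_forall fun x ↦ ?_)
        have hq : ‖conjPoissonIntegral μI ε ψ x‖ = 2 * Real.pi * q x := by
          simp only [q]; field_simp
        rw [norm_mul, hq, mul_left_comm]
        exact mul_le_mul_of_nonneg_left (hyoung x (q x) (by positivity)) (by positivity)
    _ = 2 * Real.pi * (∫ x, W x ∂μI + δ * ∫ x, Real.exp (q x) ∂μI) := by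
        rw [integral_const_mul, integral_add hW (hexp.const_mul δ), integral_const_mul]
    _ ≤ 2 * Real.pi * (∫ x, W x ∂μI + δ * expConst) := by
        gcongr
        exact integral_exp_norm_conjPoissonIntegral_le hε hψi hψ

lemma mul_le_sq_div_add_mul_exp {q : ℝ} (hδ : 0 < δ) (hq : 0 ≤ q) (a : ℝ) :
    a * q ≤ a ^ 2 / δ + δ * Real.exp q := by
  have hexp : q ^ 2 / 2 ≤ Real.exp q := by linarith [Real.quadratic_le_exp_of_nonneg hq]
  have hsq : 0 ≤ (a - δ * q / 2) ^ 2 / δ := by positivity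
  have hexpand : (a - δ * q / 2) ^ 2 / δ = a ^ 2 / δ - a * q + δ * (q ^ 2 / 4) := by
    field_simp
    ring
  nlinarith [sq_nonneg q]

lemma mul_le_mul_log_add_mul_exp {a q : ℝ} (hδ : 0 < δ) (ha : 0 ≤ a) :
    a * q ≤ a * max (Real.log (a / δ)) 0 + δ * Real.exp q := by
  set L := max (Real.log (a / δ)) 0
  have hL : a / δ ≤ Real.exp L :=
    (Real.le_exp_log _).trans (Real.exp_le_exp.2 (le_max_left _ _))
  rw [div_le_iff₀' hδ] at hL
  rcases le_total q L with h | h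
  · have := mul_le_mul_of_nonneg_left h ha
    have := mul_pos hδ (Real.exp_pos q)
    linarith
  · have key : a * (q - L) ≤ δ * Real.exp q := calc
      a * (q - L) ≤ δ * Real.exp L * Real.exp (q - L) := by
        exact mul_le_mul hL (by linarith [Real.add_one_le_exp (q - L)]) (by linarith)
          (by positivity)
      _ = δ * Real.exp q := by rw [mul_assoc, ← Real.exp_add, add_sub_cancel]
    linarith

end Duality

section L1BoundaryValues

lemma exists_tendsto_of_forall_dist_lt {α X : Type*} [PseudoMetricSpace X] [CompleteSpace X]
    {l : Filter α} [l.NeBot] {u : α → X}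
    (h : ∀ η > 0, ∃ y, ∀ᶠ a in l, dist (u a) y < η) : ∃ y, Tendsto u l (𝓝 y) := by
  refine cauchy_map_iff_exists_tendsto.1 (Metric.cauchy_iff.2 ⟨inferInstance, fun η hη ↦ ?_⟩)
  obtain ⟨y, hy⟩ := h (η / 2) (half_pos hη)
  refine ⟨u '' {a | dist (u a) y < η / 2}, image_mem_map hy, ?_⟩
  rintro _ ⟨a, ha, rfl⟩ _ ⟨b, hb, rfl⟩
  calc dist (u a) (u b) ≤ dist (u a) y + dist (u b) y := dist_triangle_right _ _ _
    _ < η := by linarith [mem_ofPred.1 ha, mem_ofPred.1 hb]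

lemma exists_tendsto_integral_norm_sub_zero {α Ω E : Type*} [MeasurableSpace Ω]
    [NormedAddCommGroup E] [CompleteSpace E] {μ : Measure Ω} {l : Filter α} [l.NeBot]
    {u : α → Ω → E} (hu : ∀ᶠ a in l, Integrable (u a) μ)
    (h : ∀ η > 0, ∃ H, Integrable H μ ∧ ∀ᶠ a in l, ∫ x, ‖u a x - H x‖ ∂μ < η) :
    ∃ H, Integrable H μ ∧ Tendsto (fun a ↦ ∫ x, ‖u a x - H x‖ ∂μ) l (𝓝 0) := by
  classical
  set U : α → Ω →₁[μ] E := fun a ↦ if ha : Integrable (u a) μ then ha.toL1 (u a) else 0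
  have dist_eq {a : α} (ha : Integrable (u a) μ) {H : Ω → E} (hH : Integrable H μ) :
      dist (U a) (hH.toL1 H) = ∫ x, ‖u a x - H x‖ ∂μ := by
    simp only [U, dif_pos ha, dist_eq_norm, ← Integrable.toL1_sub, L1.norm_of_fun_eq_integral_norm,
      Pi.sub_apply]
  obtain ⟨H, hH⟩ : ∃ H, Tendsto U l (𝓝 H) := exists_tendsto_of_forall_dist_lt fun η hη ↦ by
    obtain ⟨H, hH, hlt⟩ := h η hη
    refine ⟨hH.toL1 H, ?_⟩
    filter_upwards [hu, hlt] with a ha hlt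
    rwa [dist_eq ha hH]
  have hHi : Integrable H μ := L1.integrable_coeFn H
  refine ⟨H, hHi, (tendsto_iff_dist_tendsto_zero.1 hH).congr' ?_⟩
  filter_upwards [hu] with a ha
  rw [← dist_eq ha hHi, Integrable.toL1_coeFn]

lemma tendsto_integral_zero_of_le {α Ω : Type*} [MeasurableSpace Ω] {μ : Measure Ω}
    {l : Filter α} {u : α → Ω → ℝ} {b : α → ℝ} (hu : ∀ a x, 0 ≤ u a x)
    (h : ∀ᶠ a in l, ∫ x, u a x ∂μ ≤ b a) (hb : Tendsto b l (𝓝 0)) :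
    Tendsto (fun a ↦ ∫ x, u a x ∂μ) l (𝓝 0) :=
  tendsto_of_tendsto_of_tendsto_of_le_of_le' tendsto_const_nhds hb
    (.of_forall fun a ↦ integral_nonneg (hu a)) h

lemma tendsto_integral_filter_zero_of_dominated {α Ω E : Type*} [MeasurableSpace Ω]
    [NormedAddCommGroup E] [NormedSpace ℝ E] {μ : Measure Ω} {l : Filter α}
    [l.IsCountablyGenerated] {u : α → Ω → E} (bound : Ω → ℝ)
    (hu : ∀ᶠ a in l, AEStronglyMeasurable (u a) μ) (hle : ∀ᶠ a in l, ∀ᵐ x ∂μ, ‖u a x‖ ≤ bound x)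
    (hbound : Integrable bound μ) (hlim : ∀ᵐ x ∂μ, Tendsto (fun a ↦ u a x) l (𝓝 0)) :
    Tendsto (fun a ↦ ∫ x, u a x ∂μ) l (𝓝 0) := by
  simpa using tendsto_integral_filter_of_dominated_convergence bound hu hle hbound hlim

/-- `H` is the limit in `L¹(-1, 1)` of the conjugate Poisson integrals of `f ∈ L¹(-1, 1)`. It then
equals `π` times the finite Hilbert transform of `f`. -/
def HasL1ConjBoundaryValue (f H : ℝ → ℂ) : Prop :=
  Integrable f μI ∧ Integrable H μI ∧
    Tendsto (fun ε ↦ ∫ t, ‖conjPoissonIntegral μI ε f t - H t‖ ∂μI) (𝓝[>] 0) (𝓝 0)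

variable {μ : Measure ℝ} {ε : ℝ}

lemma integrable_norm_conjPoissonIntegral_sub {f H : ℝ → ℂ} (hf : Integrable f μI)
    (hH : Integrable H μI) (hε : ε ≠ 0) :
    Integrable (fun t ↦ ‖conjPoissonIntegral μI ε f t - H t‖) μI :=
  ((integrable_μI_of_continuous (continuous_conjPoissonIntegral hf hε)).sub hH).norm

lemma HasL1ConjBoundaryValue.add {f g H K : ℝ → ℂ} (hf : HasL1ConjBoundaryValue f H)
    (hg : HasL1ConjBoundaryValue g K) : HasL1ConjBoundaryValue (f + g) (H + K) := by
  obtain ⟨hf, hH, hfH⟩ := hf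
  obtain ⟨hg, hK, hgK⟩ := hg
  refine ⟨hf.add hg, hH.add hK, ?_⟩
  refine tendsto_integral_zero_of_le (fun _ _ ↦ norm_nonneg _) ?_ (by simpa using hfH.add hgK)
  filter_upwards [self_mem_nhdsWithin] with ε hε
  have hε : ε ≠ 0 := (mem_Ioi.1 hε).ne'
  have hfH := integrable_norm_conjPoissonIntegral_sub hf hH hε
  have hgK := integrable_norm_conjPoissonIntegral_sub hg hK hε
  rw [← integral_add hfH hgK, conjPoissonIntegral_add hf hg hε]
  refine integral_mono_of_nonneg (.of_forall fun _ ↦ norm_nonneg _) (hfH.add hgK)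
    (.of_forall fun t ↦ ?_)
  simp only [Pi.add_apply, add_sub_add_comm]
  exact norm_add_le _ _

lemma HasL1ConjBoundaryValue.const_smul {f H : ℝ → ℂ} (hf : HasL1ConjBoundaryValue f H) (c : ℂ) :
    HasL1ConjBoundaryValue (c • f) (c • H) := by
  obtain ⟨hf, hH, hfH⟩ := hf
  refine ⟨hf.smul c, hH.smul c, ?_⟩
  simpa [conjPoissonIntegral_smul, ← smul_eq_mul, ← smul_sub, norm_smul, integral_smul]
    using hfH.const_mul ‖c‖

lemma abs_mul_poissonLine_le_one (ε s : ℝ) : |ε * poissonLine ε s| ≤ 1 := by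
  rw [poissonLine, ← mul_div_assoc, ← sq, abs_of_nonneg (by positivity)]
  exact div_le_one_of_le₀ (by linarith [sq_nonneg s]) (by positivity)

lemma tendsto_mul_poissonLine_zero {s : ℝ} (hs : s ≠ 0) :
    Tendsto (fun ε ↦ ε * poissonLine ε s) (𝓝 0) (𝓝 0) := by
  have : ContinuousAt (fun ε ↦ ε * (ε / (s ^ 2 + ε ^ 2))) 0 :=
    continuousAt_id.mul (.div (by fun_prop) (by fun_prop) (by simpa))
  simpa [poissonLine, ContinuousAt] using this

lemma norm_mul_poissonIntegral_le {f : ℝ → ℂ} (hf : Integrable f μ) (ε t : ℝ) :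
    ‖ε * poissonIntegral μ ε f t‖ ≤ ∫ x, ‖f x‖ ∂μ := by
  rw [poissonIntegral, ← integral_const_mul]
  refine norm_integral_le_of_norm_le hf.norm (.of_forall fun x ↦ ?_)
  rw [Complex.real_smul, ← mul_assoc, ← Complex.ofReal_mul, norm_mul, Complex.norm_real]
  exact mul_le_of_le_one_left (norm_nonneg _) (abs_mul_poissonLine_le_one ε _)

lemma tendsto_mul_poissonIntegral_zero [NullSingletonClass μ] {f : ℝ → ℂ} (hf : Integrable f μ)
    (t : ℝ) :
    Tendsto (fun ε : ℝ ↦ ε * poissonIntegral μ ε f t) (𝓝[>] 0) (𝓝 0) := by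
  simp only [poissonIntegral, ← integral_const_mul]
  refine tendsto_integral_filter_zero_of_dominated (fun x ↦ ‖f x‖) ?_ ?_ hf.norm ?_
  · filter_upwards [self_mem_nhdsWithin] with ε hε
    exact ((integrable_poissonLine_smul hf (mem_Ioi.1 hε).ne' t).const_mul _).aestronglyMeasurable
  · refine .of_forall fun ε ↦ .of_forall fun x ↦ ?_
    rw [Complex.real_smul, ← mul_assoc, ← Complex.ofReal_mul, norm_mul, Complex.norm_real]
    exact mul_le_of_le_one_left (norm_nonneg _) (abs_mul_poissonLine_le_one ε _)
  · filter_upwards [compl_mem_ae_iff.2 (measure_singleton t)] with x hx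
    have h := (tendsto_mul_poissonLine_zero (sub_ne_zero.2 hx)).mono_left
      (nhdsWithin_le_nhds (s := Ioi 0))
    simpa [mul_assoc] using ((Complex.continuous_ofReal.tendsto 0).comp h).mul_const (f x)

lemma conjPoissonIntegral_id_mul {f : ℝ → ℂ} (hf : Integrable f μ) (hε : ε ≠ 0) (t : ℝ) :
    conjPoissonIntegral μ ε (fun x ↦ x * f x) t
      = ∫ x, f x ∂μ + t * conjPoissonIntegral μ ε f t - ε * poissonIntegral μ ε f t := by
  have hp := (integrable_poissonLine_smul hf hε t).const_mul (ε : ℂ)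
  have hq := (integrable_conjPoissonLine_smul hf hε t).const_mul (t : ℂ)
  rw [conjPoissonIntegral, conjPoissonIntegral, poissonIntegral, ← integral_const_mul,
    ← integral_const_mul, ← integral_add hf hq, ← integral_sub ?_ hp]
  · refine integral_congr_ae (.of_forall fun x ↦ ?_)
    have h := congrArg ((↑) : ℝ → ℂ) (mul_conjPoissonLine hε (x - t))
    push_cast at h
    simp only [Complex.real_smul]
    linear_combination f x * h
  · exact hf.add hq

lemma integrable_id_mul {f : ℝ → ℂ} (hf : Integrable f μI) : Integrable (fun x ↦ x * f x) μI :=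
  hf.bdd_mul (c := 1) Complex.continuous_ofReal.aestronglyMeasurable (ae_μI_of_forall fun x hx ↦ by
    rw [Complex.norm_real]
    exact abs_le.2 ⟨hx.1.le, hx.2.le⟩)

lemma tendsto_integral_norm_mul_poissonIntegral_zero {f : ℝ → ℂ} (hf : Integrable f μI) :
    Tendsto (fun ε : ℝ ↦ ∫ t, ‖ε * poissonIntegral μI ε f t‖ ∂μI) (𝓝[>] 0) (𝓝 0) := by
  refine tendsto_integral_filter_zero_of_dominated (fun _ ↦ ∫ x, ‖f x‖ ∂μI) ?_
    (.of_forall fun ε ↦ .of_forall fun t ↦ ?_) (integrable_const _)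
    (.of_forall fun t ↦ by simpa using (tendsto_mul_poissonIntegral_zero hf t).norm)
  · filter_upwards [self_mem_nhdsWithin] with ε hε
    have := continuous_poissonIntegral hf (mem_Ioi.1 hε).ne'
    exact Continuous.aestronglyMeasurable (by fun_prop)
  · rw [norm_norm]
    exact norm_mul_poissonIntegral_le hf ε t

lemma HasL1ConjBoundaryValue.id_mul {f H : ℝ → ℂ} (hf : HasL1ConjBoundaryValue f H) :
    HasL1ConjBoundaryValue (fun x ↦ x * f x) fun t ↦ ∫ x, f x ∂μI + t * H t := by
  obtain ⟨hf, hH, hfH⟩ := hf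
  have hP := tendsto_integral_norm_mul_poissonIntegral_zero hf
  refine ⟨integrable_id_mul hf, (integrable_const _).add (integrable_id_mul hH), ?_⟩
  refine tendsto_integral_zero_of_le (fun _ _ ↦ norm_nonneg _) ?_
    (by simpa only [add_zero] using hfH.add hP)
  filter_upwards [self_mem_nhdsWithin] with ε hε
  have hε : ε ≠ 0 := (mem_Ioi.1 hε).ne'
  have hPi : Integrable (fun t ↦ ‖ε * poissonIntegral μI ε f t‖) μI := by
    have := continuous_poissonIntegral hf hε
    exact integrable_μI_of_continuous (by fun_prop)
  have hQ := integrable_norm_conjPoissonIntegral_sub hf hH hε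
  rw [← integral_add hQ hPi]
  refine integral_mono_of_nonneg (.of_forall fun _ ↦ norm_nonneg _) (hQ.add hPi)
    (ae_μI_of_forall fun t ht ↦ ?_)
  calc ‖conjPoissonIntegral μI ε (fun x ↦ x * f x) t - (∫ x, f x ∂μI + t * H t)‖
      = ‖t * (conjPoissonIntegral μI ε f t - H t) - ε * poissonIntegral μI ε f t‖ := by
        rw [conjPoissonIntegral_id_mul hf hε]
        ring_nf
    _ ≤ ‖conjPoissonIntegral μI ε f t - H t‖ + ‖ε * poissonIntegral μI ε f t‖ := by
        refine (norm_sub_le _ _).trans (add_le_add_left ?_ _)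
        rw [norm_mul, Complex.norm_real]
        exact mul_le_of_le_one_left (norm_nonneg _) (abs_le.2 ⟨ht.1.le, ht.2.le⟩)

lemma tendsto_conjPoissonIntegral_semicircle {t : ℝ} (ht : t ∈ Ioo (-1 : ℝ) 1) :
    Tendsto (fun ε ↦ conjPoissonIntegral μI ε semicircle t) (𝓝[>] 0) (𝓝 (-(Real.pi * t))) := by
  have h := (Complex.continuous_re.tendsto _).comp (tendsto_sqrtSqSubOne ht)
  have h' : Tendsto (fun ε ↦ t + conjPoissonIntegral μI ε semicircle t / Real.pi)
      (𝓝[>] 0) (𝓝 0) := by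
    refine (h.congr' ?_).trans (by simp)
    filter_upwards [self_mem_nhdsWithin] with ε hε
    simp [sqrtSqSubOne_add t (mem_Ioi.1 hε).ne', -Complex.ofReal_add]
  have h'' := (h'.sub_const t).mul_const Real.pi
  refine (h''.congr fun ε ↦ ?_).trans (by simp [mul_comm])
  field_simp
  ring

lemma abs_conjPoissonIntegral_semicircle_le {ε : ℝ} (hε : ε ≠ 0) (t : ℝ) :
    |conjPoissonIntegral μI ε semicircle t| ≤ Real.pi := by
  have h := norm_cauchyTransform_semicircle_le (z := t + ε * Complex.I) (by simpa)
  rw [cauchyTransform_eq integrable_ofReal_semicircle hε, conjPoissonIntegral_ofReal,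
    poissonIntegral_ofReal] at h
  simpa using (Complex.abs_re_le_norm _).trans h

lemma hasL1ConjBoundaryValue_semicircle :
    HasL1ConjBoundaryValue (fun x ↦ semicircle x) fun t ↦ -(Real.pi * t) := by
  refine ⟨integrable_ofReal_semicircle, integrable_μI_of_continuous (by fun_prop), ?_⟩
  refine tendsto_integral_filter_zero_of_dominated (fun _ ↦ Real.pi + Real.pi) ?_ ?_
    (integrable_const _) (ae_μI_of_forall fun t ht ↦ ?_)
  · filter_upwards [self_mem_nhdsWithin] with ε hε
    exact (integrable_norm_conjPoissonIntegral_sub integrable_ofReal_semicircle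
      (integrable_μI_of_continuous (by fun_prop)) (mem_Ioi.1 hε).ne').aestronglyMeasurable
  · filter_upwards [self_mem_nhdsWithin] with ε hε
    refine ae_μI_of_forall fun t ht ↦ ?_
    have hQ := abs_conjPoissonIntegral_semicircle_le (mem_Ioi.1 hε).ne' t
    rw [norm_norm, conjPoissonIntegral_ofReal]
    refine (norm_sub_le _ _).trans (add_le_add (by simpa using hQ) ?_)
    rw [norm_neg, norm_mul, Complex.norm_real, Complex.norm_real,
      Real.norm_of_nonneg Real.pi_pos.le]
    exact mul_le_of_le_one_right Real.pi_pos.le (abs_le.2 ⟨ht.1.le, ht.2.le⟩)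
  · have h := tendsto_conjPoissonIntegral_semicircle ht
    have h' := ((Complex.continuous_ofReal.tendsto _).comp h).sub_const (-(Real.pi * t) : ℂ)
    simpa [conjPoissonIntegral_ofReal] using h'.norm

lemma exists_hasL1ConjBoundaryValue_semicircle_mul_eval (p : Polynomial ℂ) :
    ∃ H, HasL1ConjBoundaryValue (fun x ↦ semicircle x * p.eval (x : ℂ)) H := by
  induction p using Polynomial.induction_on with
  | C a =>
    exact ⟨_, by simpa [Pi.smul_def, mul_comm] using
      hasL1ConjBoundaryValue_semicircle.const_smul a⟩
  | add p q hp hq =>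
    obtain ⟨H, hp⟩ := hp
    obtain ⟨K, hq⟩ := hq
    exact ⟨_, by simpa [Pi.add_def, mul_add] using hp.add hq⟩
  | monomial n a h =>
    obtain ⟨H, h⟩ := h
    exact ⟨_, by simpa only [Polynomial.eval_mul, Polynomial.eval_C, Polynomial.eval_pow,
      Polynomial.eval_X, pow_succ', mul_left_comm (_ : ℂ)] using h.id_mul⟩

lemma exists_hasL1ConjBoundaryValue_of_forall_approx {f : ℝ → ℂ} (hf : Integrable f μI)
    (h : ∀ η > 0, ∃ g H, HasL1ConjBoundaryValue g H ∧
      ∀ ε > 0, ∫ t, ‖conjPoissonIntegral μI ε (f - g) t‖ ∂μI < η) :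
    ∃ H, HasL1ConjBoundaryValue f H := by
  have hQf : ∀ᶠ ε in 𝓝[>] (0 : ℝ), Integrable (conjPoissonIntegral μI ε f) μI := by
    filter_upwards [self_mem_nhdsWithin] with ε hε
    exact integrable_μI_of_continuous (continuous_conjPoissonIntegral hf (mem_Ioi.1 hε).ne')
  obtain ⟨H, hH, hlim⟩ := exists_tendsto_integral_norm_sub_zero hQf fun η hη ↦ by
    obtain ⟨g, H, ⟨hg, hH, hgH⟩, hfg⟩ := h (η / 2) (half_pos hη)
    refine ⟨H, hH, ?_⟩
    filter_upwards [self_mem_nhdsWithin, hgH.eventually_lt_const (half_pos hη)] with ε hε hlt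
    have hε' := (mem_Ioi.1 hε).ne'
    have hsub : Integrable (fun t ↦ ‖conjPoissonIntegral μI ε (f - g) t‖) μI :=
      (integrable_μI_of_continuous (continuous_conjPoissonIntegral (hf.sub hg) hε')).norm
    have hQg := integrable_norm_conjPoissonIntegral_sub hg hH hε'
    calc ∫ t, ‖conjPoissonIntegral μI ε f t - H t‖ ∂μI
        ≤ ∫ t, (‖conjPoissonIntegral μI ε (f - g) t‖
            + ‖conjPoissonIntegral μI ε g t - H t‖) ∂μI := by
          refine integral_mono_of_nonneg (.of_forall fun _ ↦ norm_nonneg _) (hsub.add hQg)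
            (.of_forall fun t ↦ ?_)
          simp only [conjPoissonIntegral_sub hf hg hε', Pi.sub_apply]
          exact norm_sub_le_norm_sub_add_norm_sub _ _ _
      _ < η := by
          rw [integral_add hsub hQg]
          linarith [hfg ε hε]
  exact ⟨H, hf, hH, hlim⟩

end L1BoundaryValues

section Approximation

lemma exists_complex_polynomial_near {a b η : ℝ} (hη : 0 < η) {g : ℝ → ℂ}
    (hg : ContinuousOn g (Icc a b)) :
    ∃ p : Polynomial ℂ, ∀ x ∈ Icc a b, ‖p.eval (x : ℂ) - g x‖ < η := by
  obtain ⟨p, hp⟩ := exists_polynomial_near_of_continuousOn a b (fun x ↦ (g x).re)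
    (Complex.continuous_re.comp_continuousOn hg) (η / 2) (half_pos hη)
  obtain ⟨q, hq⟩ := exists_polynomial_near_of_continuousOn a b (fun x ↦ (g x).im)
    (Complex.continuous_im.comp_continuousOn hg) (η / 2) (half_pos hη)
  refine ⟨p.map Complex.ofRealHom + q.map Complex.ofRealHom * Polynomial.C Complex.I,
    fun x hx ↦ ?_⟩
  have hmap (r : Polynomial ℝ) : (r.map Complex.ofRealHom).eval (x : ℂ) = (r.eval x : ℝ) :=
    Polynomial.eval_map_apply Complex.ofRealHom x
  refine (Complex.norm_le_abs_re_add_abs_im _).trans_lt ?_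
  simp only [Polynomial.eval_add, hmap, Polynomial.eval_mul, Polynomial.eval_C, Complex.sub_re,
    Complex.add_re, Complex.ofReal_re, Complex.mul_re, Complex.I_re, mul_zero, Complex.ofReal_im,
    Complex.I_im, mul_one, sub_self, add_zero, Complex.sub_im, Complex.add_im, Complex.mul_im,
    zero_add]
  linarith [hp x hx, hq x hx]

lemma exists_polynomial_integral_norm_sub_sq_lt {k : ℝ → ℂ} (hk : MemLp k 2 μI) {η : ℝ}
    (hη : 0 < η) : ∃ p : Polynomial ℂ, ∫ x, ‖k x - p.eval (x : ℂ)‖ ^ 2 ∂μI < η := by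
  have h2 : ENNReal.ofReal 2 = 2 := ENNReal.ofReal_ofNat 2
  have : μI.Regular := inferInstanceAs (Measure.restrict _ _).Regular
  obtain ⟨g, -, hkg, hgc, hg⟩ :=
    (h2 ▸ hk).exists_hasCompactSupport_integral_rpow_sub_le two_pos (by positivity : 0 < η / 8)
  obtain ⟨p, hp⟩ := exists_complex_polynomial_near (a := -1) (b := 1)
    (Real.sqrt_pos.2 (by positivity : 0 < η / 8)) hgc.continuousOn
  have hkg2 : Integrable (fun x ↦ ‖k x - g x‖ ^ 2) μI :=
    (hk.sub (h2 ▸ hg)).integrable_norm_pow two_ne_zero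
  refine ⟨p, ?_⟩
  simp only [Real.rpow_two] at hkg
  calc ∫ x, ‖k x - p.eval (x : ℂ)‖ ^ 2 ∂μI
      ≤ ∫ x, (2 * ‖k x - g x‖ ^ 2 + η / 4) ∂μI := by
        refine integral_mono_of_nonneg (.of_forall fun x ↦ by positivity)
          ((hkg2.const_mul 2).add (integrable_const _)) (ae_μI_of_forall fun x hx ↦ ?_)
        have hgp : ‖p.eval (x : ℂ) - g x‖ ^ 2 ≤ η / 8 :=
          ((Real.lt_sqrt (norm_nonneg _)).1 (hp x (Ioo_subset_Icc_self hx))).le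
        have htri := norm_sub_le_norm_sub_add_norm_sub (k x) (g x) (p.eval (x : ℂ))
        rw [norm_sub_rev (g x)] at htri
        have := pow_le_pow_left₀ (norm_nonneg _) htri 2
        simp only
        linarith [add_sq_le (a := ‖k x - g x‖) (b := ‖p.eval (x : ℂ) - g x‖)]
    _ = 2 * ∫ x, ‖k x - g x‖ ^ 2 ∂μI + η / 2 := by
        rw [integral_add (hkg2.const_mul 2) (integrable_const _), integral_const_mul,
          integral_const, measureReal_μI, smul_eq_mul]
        ring
    _ < η := by linarith

lemma semicircle_nonneg (x : ℝ) : 0 ≤ semicircle x := Real.sqrt_nonneg _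

lemma semicircle_le_one (x : ℝ) : semicircle x ≤ 1 :=
  Real.sqrt_le_one.2 (by nlinarith [sq_nonneg x])

lemma integrable_semicircle_mul {k : ℝ → ℂ} (hk : Integrable k μI) :
    Integrable (fun x ↦ semicircle x * k x) μI :=
  hk.bdd_mul (c := 1)
    (Complex.continuous_ofReal.comp continuous_semicircle).aestronglyMeasurable
    (.of_forall fun x ↦ by
      rw [Complex.norm_real, Real.norm_of_nonneg (semicircle_nonneg x)]
      exact semicircle_le_one x)

lemma memLp_two_eval (p : Polynomial ℂ) : MemLp (fun x : ℝ ↦ p.eval (x : ℂ)) 2 μI := by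
  have hp : Continuous fun x : ℝ ↦ p.eval (x : ℂ) := p.continuous.comp Complex.continuous_ofReal
  exact (memLp_two_iff_integrable_sq_norm hp.aestronglyMeasurable).2
    (integrable_μI_of_continuous (by fun_prop))

lemma exists_hasL1ConjBoundaryValue_semicircle_mul {k : ℝ → ℂ} (hk : MemLp k 2 μI) :
    ∃ H, HasL1ConjBoundaryValue (fun x ↦ semicircle x * k x) H := by
  have hki := hk.integrable one_le_two
  refine exists_hasL1ConjBoundaryValue_of_forall_approx (integrable_semicircle_mul hki)
    fun η hη ↦ ?_
  have hK := expConst_pos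
  set δ := η / (8 * Real.pi * expConst)
  have hδ : 0 < δ := by positivity
  have hδK : 2 * Real.pi * (δ * expConst) = η / 4 := by simp only [δ]; field_simp; norm_num
  obtain ⟨p, hp⟩ := exists_polynomial_integral_norm_sub_sq_lt hk
    (by positivity : 0 < δ * (η / (8 * Real.pi)))
  obtain ⟨H, hH⟩ := exists_hasL1ConjBoundaryValue_semicircle_mul_eval p
  refine ⟨_, H, hH, fun ε hε ↦ ?_⟩
  have hkp := hk.sub (memLp_two_eval p)
  have hsub : (fun x ↦ semicircle x * k x) - (fun x : ℝ ↦ semicircle x * p.eval (x : ℂ))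
      = fun x : ℝ ↦ semicircle x * (k x - p.eval (x : ℂ)) := by
    ext x
    simp only [Pi.sub_apply, mul_sub]
  rw [hsub]
  calc ∫ t, ‖conjPoissonIntegral μI ε (fun x ↦ semicircle x * (k x - p.eval (x : ℂ))) t‖ ∂μI
      ≤ 2 * Real.pi * (∫ x, ‖k x - p.eval (x : ℂ)‖ ^ 2 / δ ∂μI + δ * expConst) := by
        refine integral_norm_conjPoissonIntegral_le hε hδ.le
          (integrable_semicircle_mul (hkp.integrable one_le_two))
          ((hkp.integrable_norm_pow two_ne_zero).div_const δ) fun x q hq ↦ ?_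
        refine (mul_le_sq_div_add_mul_exp hδ hq _).trans ?_
        gcongr
        rw [norm_mul, Complex.norm_real, Real.norm_of_nonneg (semicircle_nonneg x)]
        exact mul_le_of_le_one_left (norm_nonneg _) (semicircle_le_one x)
    _ ≤ 2 * Real.pi * (η / (8 * Real.pi) + δ * expConst) := by
        rw [integral_div]
        have := (div_le_iff₀' hδ).2 hp.le
        exact mul_le_mul_of_nonneg_left (add_le_add_left this _) (by positivity)
    _ < η := by
        rw [mul_add, hδK]
        have : 2 * Real.pi * (η / (8 * Real.pi)) = η / 4 := by field_simp; norm_num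
        linarith

lemma le_exp_one_add_mul_log {s : ℝ} (hs : 0 ≤ s) :
    s ≤ Real.exp 1 + s * max (Real.log s) 0 := by
  rcases le_total s (Real.exp 1) with h | h
  · exact h.trans (le_add_of_nonneg_right (by positivity))
  · have hlog : 1 ≤ Real.log s := (Real.le_log_iff_exp_le ((Real.exp_pos 1).trans_le h)).2 h
    have := mul_le_mul_of_nonneg_left (hlog.trans (le_max_left _ 0)) hs
    linarith [Real.exp_pos 1]

lemma mul_log_div_le {s δ : ℝ} (hs : 0 ≤ s) (hδ : 0 < δ) :
    s * max (Real.log (s / δ)) 0 ≤ s * max (Real.log s) 0 + s * |Real.log δ| := by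
  rcases hs.eq_or_lt with rfl | hs
  · simp
  rw [← mul_add, Real.log_div hs.ne' hδ.ne']
  refine mul_le_mul_of_nonneg_left (max_le ?_ (by positivity)) hs.le
  linarith [le_max_left (Real.log s) 0, neg_abs_le (Real.log δ)]

lemma MemLlogL.integrable {f : ℝ → ℂ} (hf : MemLlogL f) : Integrable f μI :=
  ((integrable_const (Real.exp 1)).add hf.2).mono' hf.1
    (.of_forall fun _ ↦ le_exp_one_add_mul_log (norm_nonneg _))

lemma MemLlogL.integrable_mul_log_div {f : ℝ → ℂ} (hf : MemLlogL f) {δ : ℝ} (hδ : 0 < δ) :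
    Integrable (fun x ↦ ‖f x‖ * max (Real.log (‖f x‖ / δ)) 0) μI := by
  refine (hf.2.add (hf.integrable.norm.mul_const |Real.log δ|)).mono' ?_ (.of_forall fun x ↦ ?_)
  · have := hf.1.norm.aemeasurable
    exact AEMeasurable.aestronglyMeasurable (by fun_prop)
  · rw [Real.norm_of_nonneg (by positivity)]
    exact mul_log_div_le (norm_nonneg _) hδ

lemma tendsto_integral_indicator_lt_norm {f : ℝ → ℂ} (hf : AEStronglyMeasurable f μI) {W : ℝ → ℝ}
    (hW : Integrable W μI) :
    Tendsto (fun N : ℕ ↦ ∫ x, {x | N * semicircle x < ‖f x‖}.indicator W x ∂μI) atTop (𝓝 0) := by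
  refine tendsto_integral_filter_zero_of_dominated (fun x ↦ ‖W x‖) (.of_forall fun N ↦ ?_)
    (.of_forall fun N ↦ .of_forall fun x ↦ norm_indicator_le_norm_self _ _) hW.norm
    (ae_μI_of_forall fun x hx ↦ ?_)
  · exact hW.aestronglyMeasurable.indicator₀ (nullMeasurableSet_lt
      (continuous_semicircle.const_mul _).aemeasurable hf.norm.aemeasurable)
  · obtain ⟨M, hM⟩ := exists_nat_ge (‖f x‖ / semicircle x)
    refine tendsto_const_nhds.congr' ?_
    filter_upwards [eventually_ge_atTop M] with N hN
    have : ‖f x‖ ≤ N * semicircle x :=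
      (div_le_iff₀ (semicircle_pos hx)).1 (hM.trans (Nat.cast_le.2 hN))
    rw [indicator_of_notMem (by simpa using this)]

lemma memLp_two_indicator_div_semicircle {f : ℝ → ℂ} (hf : AEStronglyMeasurable f μI) (N : ℕ) :
    MemLp ({x | N * semicircle x < ‖f x‖}ᶜ.indicator fun x ↦ f x / semicircle x) 2 μI := by
  refine .of_bound ?_ N (.of_forall fun x ↦ ?_)
  · have := hf.aemeasurable
    have := continuous_semicircle
    refine AEStronglyMeasurable.indicator₀ ?_ (nullMeasurableSet_lt
      (continuous_semicircle.const_mul _).aemeasurable hf.norm.aemeasurable).compl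
    exact AEMeasurable.aestronglyMeasurable (by fun_prop)
  · refine (norm_indicator_eq_indicator_norm _ _).trans_le
      (indicator_le' (g := fun _ ↦ (N : ℝ)) (fun x hx ↦ ?_) (fun _ _ ↦ N.cast_nonneg) x)
    rw [norm_div, Complex.norm_real, Real.norm_of_nonneg (semicircle_nonneg x)]
    exact div_le_of_le_mul₀ (semicircle_nonneg x) N.cast_nonneg (not_lt.1 hx)

lemma sub_semicircle_mul_indicator (f : ℝ → ℂ) (N : ℝ) :
    (f - fun x ↦ semicircle x
        * {x | N * semicircle x < ‖f x‖}ᶜ.indicator (fun x ↦ f x / semicircle x) x)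
      = {x | N * semicircle x < ‖f x‖}.indicator f := by
  ext x
  by_cases hx : N * semicircle x < ‖f x‖
  · simp [hx]
  · have hzero : (semicircle x : ℂ) = 0 → f x = 0 := fun h ↦ by
      rw [Complex.ofReal_eq_zero.1 h, mul_zero, not_lt] at hx
      exact norm_le_zero_iff.1 hx
    simp [hx, mul_div_cancel_of_imp' hzero]

lemma exists_hasL1ConjBoundaryValue {f : ℝ → ℂ} (hf : MemLlogL f) :
    ∃ H, HasL1ConjBoundaryValue f H := by
  refine exists_hasL1ConjBoundaryValue_of_forall_approx hf.integrable fun η hη ↦ ?_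
  have hK := expConst_pos
  set δ := η / (8 * Real.pi * expConst)
  have hδ : 0 < δ := by positivity
  have hδK : 2 * Real.pi * (δ * expConst) = η / 4 := by simp only [δ]; field_simp; norm_num
  set W : ℝ → ℝ := fun x ↦ ‖f x‖ * max (Real.log (‖f x‖ / δ)) 0
  have hW : Integrable W μI := hf.integrable_mul_log_div hδ
  obtain ⟨N, hN⟩ := ((tendsto_integral_indicator_lt_norm hf.1 hW).eventually_lt_const
    (by positivity : 0 < η / (8 * Real.pi))).exists
  obtain ⟨H, hH⟩ := exists_hasL1ConjBoundaryValue_semicircle_mul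
    (memLp_two_indicator_div_semicircle hf.1 N)
  refine ⟨_, H, hH, fun ε hε ↦ ?_⟩
  rw [sub_semicircle_mul_indicator]
  set A := {x | N * semicircle x < ‖f x‖}
  have hA : NullMeasurableSet A μI := nullMeasurableSet_lt
    (continuous_semicircle.const_mul _).aemeasurable hf.1.norm.aemeasurable
  calc ∫ t, ‖conjPoissonIntegral μI ε (A.indicator f) t‖ ∂μI
      ≤ 2 * Real.pi * (∫ x, A.indicator W x ∂μI + δ * expConst) := by
        refine integral_norm_conjPoissonIntegral_le hε hδ.le (hf.integrable.indicator₀ hA)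
          (hW.indicator₀ hA) fun x q _ ↦ ?_
        by_cases hx : x ∈ A
        · simpa only [indicator_of_mem hx] using mul_le_mul_log_add_mul_exp hδ (norm_nonneg (f x))
        · simp only [indicator_of_notMem hx, norm_zero, zero_mul, zero_add]
          positivity
    _ < η := by
        have : 2 * Real.pi * (η / (8 * Real.pi)) = η / 4 := by field_simp; norm_num
        have := mul_lt_mul_of_pos_left hN Real.two_pi_pos
        linarith

end Approximation

section CauchyTransformIdentity

lemma cauchyTransform_div_sub {μ : Measure ℝ} {f : ℝ → ℂ} (hf : Integrable f μ) {z u : ℂ}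
    (hz : z.im ≠ 0) (hu : u.im ≠ 0) (hzu : z ≠ u) :
    cauchyTransform μ (fun x ↦ f x / (x - z)) u
      = (cauchyTransform μ f z - cauchyTransform μ f u) / (z - u) := by
  simp only [cauchyTransform]
  rw [← integral_sub (integrable_div_ofReal_sub hf hz) (integrable_div_ofReal_sub hf hu),
    ← integral_div]
  refine integral_congr_ae (.of_forall fun x ↦ ?_)
  have := ofReal_sub_ne_zero hz x
  have := ofReal_sub_ne_zero hu x
  have := sub_ne_zero.2 hzu
  simp only
  field_simp
  ring

lemma conjPoissonIntegral_eq_cauchyTransform {μ : Measure ℝ} {f : ℝ → ℂ} (hf : Integrable f μ)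
    {ε : ℝ} (hε : ε ≠ 0) (t : ℝ) :
    conjPoissonIntegral μ ε f t = (cauchyTransform μ f (t + ε * Complex.I)
      + cauchyTransform μ f (t - ε * Complex.I)) / 2 := by
  rw [cauchyTransform_eq hf hε, cauchyTransform_conj_eq hf hε]
  ring

lemma tendsto_poissonIntegral_semicircle {t : ℝ} (ht : t ∈ Ioo (-1 : ℝ) 1) :
    Tendsto (fun ε ↦ poissonIntegral μI ε semicircle t) (𝓝[>] 0)
      (𝓝 (Real.pi * semicircle t)) := by
  have h := (Complex.continuous_im.tendsto _).comp (tendsto_sqrtSqSubOne ht)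
  have h' : Tendsto (fun ε ↦ ε + poissonIntegral μI ε semicircle t / Real.pi)
      (𝓝[>] 0) (𝓝 (semicircle t)) := by
    refine (h.congr' ?_).trans (by simp)
    filter_upwards [self_mem_nhdsWithin] with ε hε
    simp [sqrtSqSubOne_add t (mem_Ioi.1 hε).ne', -Complex.ofReal_add]
  have h'' := ((h'.sub (tendsto_nhdsWithin_of_tendsto_nhds tendsto_id)).const_mul Real.pi)
  refine (h''.congr fun ε ↦ ?_).trans (by simp)
  simp only [id]
  field_simp
  ring

/-- The resolvent-type test function `x ↦ √(1 - x²) / (x - z)`. -/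
def semicircleResolvent (z : ℂ) (x : ℝ) : ℂ := semicircle x / (x - z)

lemma integrable_semicircleResolvent {z : ℂ} (hz : z.im ≠ 0) :
    Integrable (semicircleResolvent z) μI :=
  integrable_div_ofReal_sub integrable_ofReal_semicircle hz

lemma norm_semicircleResolvent_le {z : ℂ} (hz : z.im ≠ 0) (x : ℝ) :
    ‖semicircleResolvent z x‖ ≤ |z.im|⁻¹ := by
  rw [semicircleResolvent, div_eq_mul_inv, norm_mul, Complex.norm_real,
    Real.norm_of_nonneg (semicircle_nonneg x)]
  exact (mul_le_of_le_one_left (norm_nonneg _) (semicircle_le_one x)).trans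
    (norm_inv_ofReal_sub_le hz x)

lemma half_abs_im_le_norm_sub {z u : ℂ} (h : 2 * |u.im| ≤ |z.im|) : |z.im| / 2 ≤ ‖z - u‖ := by
  have := Complex.abs_im_le_norm (z - u)
  rw [Complex.sub_im] at this
  linarith [abs_sub_abs_le_abs_sub z.im u.im]

lemma norm_cauchyTransform_semicircleResolvent_le {z u : ℂ} (hz : z.im ≠ 0) (hu : u.im ≠ 0)
    (h : 2 * |u.im| ≤ |z.im|) :
    ‖cauchyTransform μI (semicircleResolvent z) u‖ ≤ 4 * Real.pi / |z.im| := by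
  have hz' := abs_pos.2 hz
  have hzu := half_abs_im_le_norm_sub h
  have hne : z ≠ u := by
    rintro rfl
    rw [sub_self, norm_zero] at hzu
    linarith
  rw [show semicircleResolvent z = fun x : ℝ ↦ (semicircle x : ℂ) / (x - z) from rfl,
    cauchyTransform_div_sub integrable_ofReal_semicircle hz hu hne, norm_div]
  calc _ ≤ (Real.pi + Real.pi) / (|z.im| / 2) := by
        gcongr
        exact (norm_sub_le _ _).trans (add_le_add (norm_cauchyTransform_semicircle_le hz)
          (norm_cauchyTransform_semicircle_le hu))
    _ = 4 * Real.pi / |z.im| := by field_simp; ring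

lemma norm_conjPoissonIntegral_semicircleResolvent_le {z : ℂ} (hz : z.im ≠ 0) {ε : ℝ}
    (hε : 0 < ε) (hεz : 2 * ε ≤ |z.im|) (t : ℝ) :
    ‖conjPoissonIntegral μI ε (semicircleResolvent z) t‖ ≤ 4 * Real.pi / |z.im| := by
  have hεz' : 2 * |ε| ≤ |z.im| := by rwa [abs_of_pos hε]
  have hadd := norm_cauchyTransform_semicircleResolvent_le hz (u := t + ε * Complex.I)
    (by simpa using hε.ne') (by simpa using hεz')
  have hsub := norm_cauchyTransform_semicircleResolvent_le hz (u := t - ε * Complex.I)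
    (by simpa using hε.ne') (by simpa using hεz')
  rw [conjPoissonIntegral_eq_cauchyTransform (integrable_semicircleResolvent hz) hε.ne', norm_div,
    Complex.norm_two, div_le_iff₀ two_pos]
  linarith [norm_add_le (cauchyTransform μI (semicircleResolvent z) (t + ε * Complex.I))
    (cauchyTransform μI (semicircleResolvent z) (t - ε * Complex.I))]

lemma conjPoissonIntegral_semicircleResolvent {z : ℂ} (hz : z.im ≠ 0) {ε : ℝ} (hε : 0 < ε)
    (hεz : 2 * ε ≤ |z.im|) (t : ℝ) :
    conjPoissonIntegral μI ε (semicircleResolvent z) t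
      = ((cauchyTransform μI (fun x ↦ semicircle x) z
            - (conjPoissonIntegral μI ε semicircle t
              + poissonIntegral μI ε semicircle t * Complex.I)) / (z - (t + ε * Complex.I))
          + (cauchyTransform μI (fun x ↦ semicircle x) z
            - (conjPoissonIntegral μI ε semicircle t
              - poissonIntegral μI ε semicircle t * Complex.I)) / (z - (t - ε * Complex.I)))
        / 2 := by
  have hne {u : ℂ} (hu : |u.im| = ε) : z ≠ u := by
    rintro rfl
    linarith
  rw [conjPoissonIntegral_eq_cauchyTransform (integrable_semicircleResolvent hz) hε.ne',
    show semicircleResolvent z = fun x : ℝ ↦ (semicircle x : ℂ) / (x - z) from rfl,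
    cauchyTransform_div_sub integrable_ofReal_semicircle hz (by simpa using hε.ne')
      (hne (by simpa using hε.le)),
    cauchyTransform_div_sub integrable_ofReal_semicircle hz (by simpa using hε.ne')
      (hne (by simpa using hε.le)),
    cauchyTransform_eq integrable_ofReal_semicircle hε.ne',
    cauchyTransform_conj_eq integrable_ofReal_semicircle hε.ne',
    conjPoissonIntegral_ofReal, poissonIntegral_ofReal]

lemma tendsto_conjPoissonIntegral_semicircleResolvent {z : ℂ} (hz : z.im ≠ 0) {t : ℝ}
    (ht : t ∈ Ioo (-1 : ℝ) 1) :
    Tendsto (fun ε ↦ conjPoissonIntegral μI ε (semicircleResolvent z) t) (𝓝[>] 0)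
      (𝓝 ((cauchyTransform μI (fun x ↦ semicircle x) z + Real.pi * t) / (z - t))) := by
  have hQ := (Complex.continuous_ofReal.tendsto _).comp (tendsto_conjPoissonIntegral_semicircle ht)
  have hP := ((Complex.continuous_ofReal.tendsto _).comp
    (tendsto_poissonIntegral_semicircle ht)).mul_const Complex.I
  have hε : Tendsto (fun ε : ℝ ↦ (ε * Complex.I : ℂ)) (𝓝[>] 0) (𝓝 0) :=
    tendsto_nhdsWithin_of_tendsto_nhds
      ((by fun_prop : Continuous fun ε : ℝ ↦ (ε * Complex.I : ℂ)).tendsto' 0 0 (by simp))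
  have hzt : z - t ≠ 0 := by
    rw [← neg_sub, neg_ne_zero]
    exact ofReal_sub_ne_zero hz t
  set C := cauchyTransform μI (fun x ↦ semicircle x) z
  have hadd := ((hQ.add hP).const_sub C).div ((hε.const_add (t : ℂ)).const_sub z) (by simpa)
  have hsub := ((hQ.sub hP).const_sub C).div ((hε.const_sub (t : ℂ)).const_sub z) (by simpa)
  refine ((hadd.add hsub).div_const 2).congr' ?_ |>.trans_eq ?_
  · filter_upwards [Ioc_mem_nhdsGT (half_pos (abs_pos.2 hz))] with ε hε
    exact (conjPoissonIntegral_semicircleResolvent hz hε.1 (by linarith [hε.2]) t).symm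
  · congr 1
    push_cast
    rw [add_zero, sub_zero]
    ring

lemma norm_integral_mul_le_of_bound {α : Type*} [MeasurableSpace α] {μ : Measure α} {g u : α → ℂ}
    {C : ℝ} (hg : ∀ x, ‖g x‖ ≤ C) (hu : Integrable u μ) :
    ‖∫ x, g x * u x ∂μ‖ ≤ C * ∫ x, ‖u x‖ ∂μ := by
  rw [← integral_const_mul]
  refine norm_integral_le_of_norm_le (hu.norm.const_mul C) (.of_forall fun x ↦ ?_)
  rw [norm_mul]
  exact mul_le_mul_of_nonneg_right (hg x) (norm_nonneg _)

lemma HasL1ConjBoundaryValue.tendsto_integral_mul {f H g : ℝ → ℂ}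
    (h : HasL1ConjBoundaryValue f H) {C : ℝ} (hgm : AEStronglyMeasurable g μI)
    (hg : ∀ x, ‖g x‖ ≤ C) :
    Tendsto (fun ε ↦ ∫ x, g x * conjPoissonIntegral μI ε f x ∂μI) (𝓝[>] 0)
      (𝓝 (∫ x, g x * H x ∂μI)) := by
  obtain ⟨hf, hH, hlim⟩ := h
  rw [tendsto_iff_norm_sub_tendsto_zero]
  refine squeeze_zero' (.of_forall fun ε ↦ norm_nonneg _) ?_ (by simpa using hlim.const_mul C)
  filter_upwards [self_mem_nhdsWithin] with ε (hε : 0 < ε)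
  have hQ : Integrable (conjPoissonIntegral μI ε f) μI :=
    integrable_μI_of_continuous (continuous_conjPoissonIntegral hf hε.ne')
  have hbdd {u : ℝ → ℂ} (hu : Integrable u μI) : Integrable (fun x ↦ g x * u x) μI :=
    hu.bdd_mul (c := C) hgm (.of_forall hg)
  rw [← integral_sub (hbdd hQ) (hbdd hH)]
  simp only [← mul_sub]
  exact norm_integral_mul_le_of_bound hg (hQ.sub hH)

lemma tendsto_integral_mul_conjPoissonIntegral_semicircleResolvent {f : ℝ → ℂ}
    (hf : Integrable f μI) {z : ℂ} (hz : z.im ≠ 0) :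
    Tendsto (fun ε ↦ ∫ x, f x * conjPoissonIntegral μI ε (semicircleResolvent z) x ∂μI) (𝓝[>] 0)
      (𝓝 (∫ x, f x * ((cauchyTransform μI (fun x ↦ semicircle x) z + Real.pi * x) / (z - x))
        ∂μI)) := by
  have hsmall : ∀ᶠ ε : ℝ in 𝓝[>] 0, ε ∈ Ioc 0 (|z.im| / 2) :=
    Ioc_mem_nhdsGT (half_pos (abs_pos.2 hz))
  refine tendsto_integral_filter_of_dominated_convergence
    (fun x ↦ ‖f x‖ * (4 * Real.pi / |z.im|)) ?_ ?_ (hf.norm.mul_const _)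
    (ae_μI_of_forall fun x hx ↦
      (tendsto_conjPoissonIntegral_semicircleResolvent hz hx).const_mul (f x))
  · filter_upwards [hsmall] with ε hε
    exact hf.1.mul (continuous_conjPoissonIntegral (integrable_semicircleResolvent hz)
      hε.1.ne').aestronglyMeasurable
  · filter_upwards [hsmall] with ε hε
    refine .of_forall fun x ↦ ?_
    rw [norm_mul]
    gcongr
    exact norm_conjPoissonIntegral_semicircleResolvent_le hz hε.1 (by linarith [hε.2]) x

lemma integral_mul_add_mul_div_sub {μ : Measure ℝ} {f : ℝ → ℂ} (hf : Integrable f μ) {z : ℂ}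
    (hz : z.im ≠ 0) (a b : ℂ) :
    ∫ x, f x * ((a + b * x) / (z - x)) ∂μ
      = -((a + b * z) * cauchyTransform μ f z + b * ∫ x, f x ∂μ) := by
  rw [cauchyTransform, ← integral_const_mul, ← integral_const_mul,
    ← integral_add ((integrable_div_ofReal_sub hf hz).const_mul _) (hf.const_mul _),
    ← integral_neg]
  refine integral_congr_ae (.of_forall fun x ↦ ?_)
  have hxz := ofReal_sub_ne_zero hz x
  have hzx : z - x ≠ 0 := by rwa [← neg_sub, neg_ne_zero]
  simp only
  field_simp
  ring

lemma HasL1ConjBoundaryValue.cauchyTransform_semicircle_mul {f H : ℝ → ℂ}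
    (h : HasL1ConjBoundaryValue f H) {z : ℂ} (hz : z.im ≠ 0) :
    cauchyTransform μI (fun x ↦ semicircle x * H x) z
      = Real.pi * (∫ x, f x ∂μI + sqrtSqSubOne z * cauchyTransform μI f z) := by
  have hlim := (tendsto_integral_mul_conjPoissonIntegral_semicircleResolvent h.1 hz).neg
  rw [integral_mul_add_mul_div_sub h.1 hz, neg_neg] at hlim
  have hdual : ∀ᶠ ε : ℝ in 𝓝[>] 0,
      -∫ x, f x * conjPoissonIntegral μI ε (semicircleResolvent z) x ∂μI
        = ∫ x, semicircleResolvent z x * conjPoissonIntegral μI ε f x ∂μI := by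
    filter_upwards [self_mem_nhdsWithin] with ε hε
    exact (integral_mul_conjPoissonIntegral hε.ne' h.1 (integrable_semicircleResolvent hz)).symm
  have huniq := tendsto_nhds_unique (hlim.congr' hdual) (h.tendsto_integral_mul
    (integrable_semicircleResolvent hz).1 (norm_semicircleResolvent_le hz))
  rw [sqrtSqSubOne]
  calc _ = ∫ x, semicircleResolvent z x * H x ∂μI :=
        integral_congr_ae (.of_forall fun x ↦ by simp only [semicircleResolvent]; ring)
    _ = _ := huniq.symm
    _ = _ := by field_simp; ring

end CauchyTransformIdentity

section LebesguePoints

lemma setOf_lt_poissonLine_sub {ε a : ℝ} (hε : 0 < ε) (ha : 0 < a) (t : ℝ) :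
    {x | a < poissonLine ε (x - t)} = Metric.ball t √(ε / a - ε ^ 2) := by
  ext x
  rw [mem_ofPred, Metric.mem_ball, Real.dist_eq, Real.lt_sqrt (abs_nonneg _), sq_abs, poissonLine,
    lt_div_iff₀ (by positivity), lt_sub_iff_add_lt, lt_div_iff₀ ha, mul_comm]

/- The superlevel sets of the Poisson kernel are balls, so by the layer-cake formula its integrals
are monotone in the masses of balls. -/
lemma lintegral_poissonLine_le_of_measure_ball_le {ν₁ ν₂ : Measure ℝ} {t : ℝ}
    (h : ∀ r, ν₁ (Metric.ball t r) ≤ ν₂ (Metric.ball t r)) {ε : ℝ} (hε : 0 < ε) :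
    ∫⁻ x, ENNReal.ofReal (poissonLine ε (x - t)) ∂ν₁
      ≤ ∫⁻ x, ENNReal.ofReal (poissonLine ε (x - t)) ∂ν₂ := by
  have hnonneg (ν : Measure ℝ) : 0 ≤ᵐ[ν] fun x ↦ poissonLine ε (x - t) :=
    .of_forall fun x ↦ poissonLine_nonneg hε.le _
  have hmeas : Measurable fun x ↦ poissonLine ε (x - t) :=
    ((continuous_poissonLine hε.ne').comp (continuous_sub_right t)).measurable
  rw [lintegral_eq_lintegral_meas_lt ν₁ (hnonneg ν₁) hmeas.aemeasurable,
    lintegral_eq_lintegral_meas_lt ν₂ (hnonneg ν₂) hmeas.aemeasurable]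
  refine setLIntegral_mono' measurableSet_Ioi fun a ha ↦ ?_
  rw [setOf_lt_poissonLine_sub hε ha]
  exact h _

lemma lintegral_poissonLine_sub {ε : ℝ} (hε : 0 < ε) (t : ℝ) :
    ∫⁻ x, ENNReal.ofReal (poissonLine ε (x - t)) = ENNReal.ofReal Real.pi := by
  rw [lintegral_sub_right_eq_self (fun x ↦ ENNReal.ofReal (poissonLine ε x)),
    ← ofReal_integral_eq_lintegral_ofReal (integrable_poissonLine hε)
      (.of_forall (poissonLine_nonneg hε.le)), integral_poissonLine hε]

lemma setLIntegral_closedBall_poissonLine_le {u : ℝ → ENNReal} {t r₀ : ℝ} {η : ENNReal}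
    (hη : ∀ r ∈ Ioc 0 r₀,
      ∫⁻ x in Metric.closedBall t r, u x ≤ η * volume (Metric.closedBall t r))
    (hu : AEMeasurable u) {ε : ℝ} (hε : 0 < ε) :
    ∫⁻ x in Metric.closedBall t r₀, u x * ENNReal.ofReal (poissonLine ε (x - t))
      ≤ η * ENNReal.ofReal Real.pi := by
  have hball (r : ℝ) : (volume.withDensity u).restrict (Metric.closedBall t r₀) (Metric.ball t r)
      ≤ (η • volume) (Metric.ball t r) := by
    have hvol : volume (Metric.closedBall t (min r r₀)) ≤ volume (Metric.ball t r) := by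
      rw [Real.volume_closedBall, Real.volume_ball]
      gcongr
      exact min_le_left _ _
    rw [Measure.restrict_apply measurableSet_ball, Measure.smul_apply, smul_eq_mul]
    have hsub : Metric.ball t r ∩ Metric.closedBall t r₀ ⊆ Metric.closedBall t (min r r₀) :=
      fun x hx ↦ Metric.mem_closedBall.2 (le_min (Metric.mem_ball.1 hx.1).le hx.2)
    refine (measure_mono hsub).trans (le_trans ?_ (mul_le_mul_right hvol η))
    · rcases le_or_gt (min r r₀) 0 with hr | hr
      · refine (withDensity_absolutelyContinuous volume u ?_).trans_le zero_le
        rw [Real.volume_closedBall, ENNReal.ofReal_eq_zero]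
        linarith
      · rw [withDensity_apply _ measurableSet_closedBall]
        exact hη _ ⟨hr, min_le_right _ _⟩
  have hp : Measurable fun x ↦ ENNReal.ofReal (poissonLine ε (x - t)) :=
    ((continuous_poissonLine hε.ne').comp (continuous_sub_right t)).measurable.ennreal_ofReal
  calc _ = ∫⁻ x, ENNReal.ofReal (poissonLine ε (x - t))
        ∂(volume.withDensity u).restrict (Metric.closedBall t r₀) := by
        rw [restrict_withDensity measurableSet_closedBall,
          lintegral_withDensity_eq_lintegral_mul₀ hu.restrict hp.aemeasurable]
        rfl
    _ ≤ ∫⁻ x, ENNReal.ofReal (poissonLine ε (x - t)) ∂(η • volume) :=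
        lintegral_poissonLine_le_of_measure_ball_le hball hε
    _ = _ := by rw [lintegral_smul_measure, lintegral_poissonLine_sub hε, smul_eq_mul]

lemma poissonLine_le_mul_poissonLine_one {ε r s : ℝ} (hε : 0 ≤ ε) (hr : 0 < r) (hs : r ≤ |s|) :
    poissonLine ε s ≤ ε * (1 + (r ^ 2)⁻¹) * poissonLine 1 s := by
  have hs' : 0 < |s| := hr.trans_le hs
  have h : (1 : ℝ) ≤ s ^ 2 / r ^ 2 := by
    rw [one_le_div (by positivity), ← sq_abs s]
    gcongr
  have hs2 : 0 < s ^ 2 := by rw [← sq_abs]; positivity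
  calc ε / (s ^ 2 + ε ^ 2) ≤ ε / s ^ 2 := by
        gcongr
        exact le_add_of_nonneg_right (sq_nonneg ε)
    _ = ε * (s ^ 2)⁻¹ := div_eq_mul_inv _ _
    _ ≤ ε * ((1 + (r ^ 2)⁻¹) * poissonLine 1 s) := by
        gcongr
        rw [poissonLine, one_pow, ← div_eq_mul_one_div, inv_le_iff_one_le_mul₀ hs2,
          div_mul_eq_mul_div, le_div_iff₀ (by positivity)]
        linarith [div_eq_mul_inv (s ^ 2) (r ^ 2)]
    _ = _ := (mul_assoc _ _ _).symm

lemma tendsto_lintegral_mul_poissonLine {u : ℝ → ENNReal} (hu : AEMeasurable u) {t : ℝ}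
    (hfin : ∫⁻ x, u x * ENNReal.ofReal (poissonLine 1 (x - t)) ≠ ⊤)
    (ht : Tendsto (fun r ↦ (∫⁻ x in Metric.closedBall t r, u x) / volume (Metric.closedBall t r))
      (𝓝[>] 0) (𝓝 0)) :
    Tendsto (fun ε ↦ ∫⁻ x, u x * ENNReal.ofReal (poissonLine ε (x - t))) (𝓝[>] 0) (𝓝 0) := by
  set K := ∫⁻ x, u x * ENNReal.ofReal (poissonLine 1 (x - t)) with hK
  have hpi : ENNReal.ofReal Real.pi ≠ 0 := by simpa using Real.pi_pos
  rw [ENNReal.tendsto_nhds_zero] at ht ⊢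
  intro δ hδ
  obtain ⟨r₀, hr₀, hη⟩ : ∃ r₀ > 0, ∀ r ∈ Ioc 0 r₀, (∫⁻ x in Metric.closedBall t r, u x)
      / volume (Metric.closedBall t r) ≤ δ / 2 / ENNReal.ofReal Real.pi :=
    mem_nhdsGT_iff_exists_Ioc_subset.1
      (ht _ (ENNReal.div_pos (ENNReal.half_pos hδ.ne').ne' ENNReal.ofReal_ne_top))
  have hfar (ε : ℝ) (hε : 0 < ε) : ∫⁻ x in (Metric.closedBall t r₀)ᶜ,
      u x * ENNReal.ofReal (poissonLine ε (x - t))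
        ≤ ENNReal.ofReal (ε * (1 + (r₀ ^ 2)⁻¹)) * K := by
    rw [hK, ← lintegral_const_mul' _ _ ENNReal.ofReal_ne_top]
    refine (setLIntegral_mono' measurableSet_closedBall.compl fun x hx ↦ ?_).trans
      (setLIntegral_le_lintegral _ _)
    rw [mul_left_comm, ← ENNReal.ofReal_mul (by positivity)]
    gcongr
    refine poissonLine_le_mul_poissonLine_one hε.le hr₀ ?_
    have : r₀ < |x - t| := by simpa [Real.dist_eq] using hx
    exact this.le
  have hsmall : ∀ᶠ ε : ℝ in 𝓝[>] 0, ENNReal.ofReal (ε * (1 + (r₀ ^ 2)⁻¹)) * K ≤ δ / 2 := by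
    have hlim : Tendsto (fun ε ↦ ENNReal.ofReal (ε * (1 + (r₀ ^ 2)⁻¹)) * K) (𝓝[>] 0) (𝓝 0) :=
      tendsto_nhdsWithin_of_tendsto_nhds (((ENNReal.continuous_mul_const hfin).comp
        (ENNReal.continuous_ofReal.comp (continuous_mul_const _))).tendsto' 0 0 (by simp))
    exact ENNReal.tendsto_nhds_zero.1 hlim _ (ENNReal.half_pos hδ.ne')
  filter_upwards [hsmall, self_mem_nhdsWithin] with ε hεδ hε
  rw [← lintegral_add_compl _ (measurableSet_closedBall (x := t) (ε := r₀)), ← ENNReal.add_halves δ]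
  refine add_le_add ?_ ((hfar ε hε).trans hεδ)
  refine (setLIntegral_closedBall_poissonLine_le (fun r hr ↦ ?_) hu hε).trans_eq
    (ENNReal.div_mul_cancel hpi ENNReal.ofReal_ne_top)
  exact (ENNReal.div_le_iff (by simpa using hr.1) measure_closedBall_lt_top.ne).1 (hη r hr)

variable {E : Type*} [NormedAddCommGroup E] [NormedSpace ℝ E]

lemma ae_tendsto_lintegral_enorm_sub_mul_poissonLine {F : ℝ → E} (hF : Integrable F) :
    ∀ᵐ t, Tendsto (fun ε ↦ ∫⁻ x, ‖F x - F t‖ₑ * ENNReal.ofReal (poissonLine ε (x - t)))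
      (𝓝[>] 0) (𝓝 0) := by
  filter_upwards [(Besicovitch.vitaliFamily volume).ae_tendsto_lintegral_enorm_sub_div
    hF.locallyIntegrable] with t ht
  have hint : Integrable fun x ↦ poissonLine 1 (x - t) • (F x - F t) := by
    simp only [smul_sub]
    exact (integrable_poissonLine_smul hF one_ne_zero t).sub
      (((integrable_poissonLine one_pos).comp_sub_right t).smul_const _)
  refine tendsto_lintegral_mul_poissonLine (hF.1.sub aestronglyMeasurable_const).enorm ?_
    (ht.comp (Besicovitch.tendsto_filterAt volume t))
  convert hint.2.ne using 3 with x
  rw [enorm_smul, mul_comm, Real.enorm_of_nonneg (poissonLine_nonneg zero_le_one _), Pi.sub_apply]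

lemma ae_tendsto_integral_smul_of_abs_le_poissonLine {F : ℝ → E} (hF : Integrable F)
    [CompleteSpace E] {k : ℝ → ℝ → ℝ} {m : ℝ} (hk : ∀ ε, Measurable (k ε))
    (hkp : ∀ ε > 0, ∀ s, |k ε s| ≤ poissonLine ε s) (hm : ∀ ε > 0, ∫ s, k ε s = m) :
    ∀ᵐ t, Tendsto (fun ε ↦ ∫ x, k ε (x - t) • F x) (𝓝[>] 0) (𝓝 (m • F t)) := by
  filter_upwards [ae_tendsto_lintegral_enorm_sub_mul_poissonLine hF] with t ht
  rw [tendsto_iff_edist_tendsto_0]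
  refine tendsto_of_tendsto_of_tendsto_of_le_of_le' tendsto_const_nhds ht
    (.of_forall fun ε ↦ zero_le) ?_
  filter_upwards [self_mem_nhdsWithin] with ε (hε : 0 < ε)
  have hmeas : Measurable fun x ↦ k ε (x - t) := (hk ε).comp (measurable_id.sub_const t)
  have hint : Integrable fun x ↦ k ε (x - t) :=
    ((integrable_poissonLine hε).comp_sub_right t).mono' hmeas.aestronglyMeasurable
      (.of_forall fun x ↦ hkp ε hε _)
  have hintF : Integrable fun x ↦ k ε (x - t) • F x :=
    hF.bdd_smul |ε|⁻¹ hmeas.aestronglyMeasurable (.of_forall fun x ↦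
      (hkp ε hε _).trans ((le_abs_self _).trans (abs_poissonLine_le hε.ne' _)))
  have hmt : m • F t = ∫ x, k ε (x - t) • F t := by
    rw [integral_smul_const, integral_sub_right_eq_self (k ε), hm ε hε]
  rw [edist_eq_enorm_sub, hmt, ← integral_sub hintF (hint.smul_const _)]
  refine (enorm_integral_le_lintegral_enorm _).trans (lintegral_mono fun x ↦ ?_)
  rw [← smul_sub, enorm_smul, mul_comm, Real.enorm_eq_ofReal_abs]
  gcongr
  exact hkp ε hε _

/-- The principal-value kernel `1 / s`, cut off to `ε ≤ |s|`. -/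
def truncatedInv (ε s : ℝ) : ℝ := if ε ≤ |s| then s⁻¹ else 0

lemma measurable_truncatedInv (ε : ℝ) : Measurable (truncatedInv ε) :=
  .ite (measurableSet_le measurable_const measurable_norm) measurable_inv measurable_const

lemma truncatedInv_neg (ε s : ℝ) : truncatedInv ε (-s) = -truncatedInv ε s := by
  simp only [truncatedInv, abs_neg]
  split_ifs <;> simp [inv_neg]

lemma abs_truncatedInv_le {ε : ℝ} (hε : 0 < ε) (s : ℝ) : |truncatedInv ε s| ≤ ε⁻¹ := by
  rw [truncatedInv]
  split_ifs with h
  · rw [abs_inv]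
    exact inv_anti₀ hε h
  · simpa using hε.le

lemma abs_conjPoissonLine_sub_truncatedInv_le {ε : ℝ} (hε : 0 < ε) (s : ℝ) :
    |conjPoissonLine ε s - truncatedInv ε s| ≤ poissonLine ε s := by
  have hd : 0 < s ^ 2 + ε ^ 2 := by positivity
  rw [truncatedInv, conjPoissonLine, poissonLine]
  split_ifs with h
  · have hs : 0 < |s| := hε.trans_le h
    have hs0 : s ≠ 0 := abs_pos.1 hs
    have hdiff : s / (s ^ 2 + ε ^ 2) - s⁻¹ = -(ε / s * (ε / (s ^ 2 + ε ^ 2))) := by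
      field_simp
      ring
    rw [hdiff, abs_neg, abs_mul, abs_div, abs_of_pos hε, abs_of_pos (div_pos hε hd)]
    exact mul_le_of_le_one_left (div_pos hε hd).le ((div_le_one hs).2 h)
  · rw [sub_zero, abs_div, abs_of_pos hd]
    gcongr
    exact (not_le.1 h).le

lemma integral_eq_zero_of_odd {k : ℝ → ℝ} (hk : ∀ s, k (-s) = -k s) : ∫ s, k s = 0 := by
  have h := integral_neg_eq_self k volume
  simp only [hk, integral_neg] at h
  linarith

variable {S : Set ℝ} {f : ℝ → E}

lemma setIntegral_smul_eq_integral_smul_indicator {k : ℝ → ℝ} (hS : MeasurableSet S) :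
    ∫ x in S, k x • f x = ∫ x, k x • S.indicator f x := by
  rw [← integral_indicator hS, indicator_smul]

variable [CompleteSpace E]

lemma ae_tendsto_poissonIntegral (hS : MeasurableSet S) (hf : IntegrableOn f S) :
    ∀ᵐ t ∂volume.restrict S, Tendsto (fun ε ↦ poissonIntegral (volume.restrict S) ε f t)
      (𝓝[>] 0) (𝓝 (Real.pi • f t)) := by
  have h := ae_tendsto_integral_smul_of_abs_le_poissonLine (hf.integrable_indicator hS)
    (k := poissonLine) (fun ε ↦ by unfold poissonLine; fun_prop)
    (fun ε hε s ↦ (abs_of_nonneg (poissonLine_nonneg hε.le s)).le)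
    (fun ε hε ↦ integral_poissonLine hε)
  filter_upwards [ae_restrict_of_ae h, ae_restrict_mem hS] with t ht htS
  rw [indicator_of_mem htS] at ht
  exact ht.congr fun ε ↦ (setIntegral_smul_eq_integral_smul_indicator hS).symm

lemma ae_tendsto_conjPoissonIntegral_sub (hS : MeasurableSet S) (hf : IntegrableOn f S) :
    ∀ᵐ t ∂volume.restrict S, Tendsto (fun ε ↦ conjPoissonIntegral (volume.restrict S) ε f t
      - ∫ x in S, truncatedInv ε (x - t) • f x) (𝓝[>] 0) (𝓝 0) := by
  have h := ae_tendsto_integral_smul_of_abs_le_poissonLine (hf.integrable_indicator hS)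
    (k := fun ε s ↦ conjPoissonLine ε s - truncatedInv ε s) (m := 0)
    (fun ε ↦ .sub (by unfold conjPoissonLine; fun_prop) (measurable_truncatedInv ε))
    (fun ε hε s ↦ abs_conjPoissonLine_sub_truncatedInv_le hε s)
    (fun ε _ ↦ integral_eq_zero_of_odd fun s ↦ by
      rw [conjPoissonLine_neg, truncatedInv_neg]; ring)
  filter_upwards [ae_restrict_of_ae h] with t ht
  rw [zero_smul] at ht
  refine ht.congr' ?_
  filter_upwards [self_mem_nhdsWithin] with ε (hε : 0 < ε)
  have htrunc : Integrable (fun x ↦ truncatedInv ε (x - t) • f x) (volume.restrict S) :=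
    hf.bdd_smul ε⁻¹ ((measurable_truncatedInv ε).comp
      (measurable_id.sub_const t)).aestronglyMeasurable
      (.of_forall fun x ↦ abs_truncatedInv_le hε _)
  rw [conjPoissonIntegral, ← integral_sub (integrable_conjPoissonLine_smul hf hε.ne' t) htrunc,
    ← setIntegral_smul_eq_integral_smul_indicator hS]
  simp only [sub_smul]

end LebesguePoints

section InversionFormula

namespace HasL1ConjBoundaryValue

variable {f H : ℝ → ℂ}

lemma integrable_semicircle_mul (h : HasL1ConjBoundaryValue f H) :
    Integrable (fun x ↦ (semicircle x : ℂ) * H x) μI :=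
  _root_.integrable_semicircle_mul h.2.1

lemma poissonIntegral_semicircle_mul (h : HasL1ConjBoundaryValue f H) {ε : ℝ} (hε : ε ≠ 0)
    (t : ℝ) :
    poissonIntegral μI ε (fun x ↦ (semicircle x : ℂ) * H x) t
      = Real.pi * ((t + conjPoissonIntegral μI ε semicircle t / Real.pi : ℝ)
          * poissonIntegral μI ε f t
        + (ε + poissonIntegral μI ε semicircle t / Real.pi : ℝ)
          * conjPoissonIntegral μI ε f t) := by
  have hadd := h.cauchyTransform_semicircle_mul (z := t + ε * Complex.I) (by simpa)
  have hsub := h.cauchyTransform_semicircle_mul (z := t - ε * Complex.I) (by simpa)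
  rw [cauchyTransform_eq h.integrable_semicircle_mul hε, cauchyTransform_eq h.1 hε,
    sqrtSqSubOne_add t hε] at hadd
  rw [cauchyTransform_conj_eq h.integrable_semicircle_mul hε, cauchyTransform_conj_eq h.1 hε,
    sqrtSqSubOne_sub t hε] at hsub
  refine mul_right_cancel₀ (mul_ne_zero two_ne_zero Complex.I_ne_zero) ?_
  linear_combination hadd - hsub

lemma conjPoissonIntegral_semicircle_mul (h : HasL1ConjBoundaryValue f H) {ε : ℝ} (hε : ε ≠ 0)
    (t : ℝ) :
    conjPoissonIntegral μI ε (fun x ↦ (semicircle x : ℂ) * H x) t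
      = Real.pi * (∫ x, f x ∂μI + (t + conjPoissonIntegral μI ε semicircle t / Real.pi : ℝ)
          * conjPoissonIntegral μI ε f t
        - (ε + poissonIntegral μI ε semicircle t / Real.pi : ℝ) * poissonIntegral μI ε f t) := by
  have hadd := h.cauchyTransform_semicircle_mul (z := t + ε * Complex.I) (by simpa)
  have hsub := h.cauchyTransform_semicircle_mul (z := t - ε * Complex.I) (by simpa)
  rw [cauchyTransform_eq h.integrable_semicircle_mul hε, cauchyTransform_eq h.1 hε,
    sqrtSqSubOne_add t hε] at hadd
  rw [cauchyTransform_conj_eq h.integrable_semicircle_mul hε, cauchyTransform_conj_eq h.1 hε,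
    sqrtSqSubOne_sub t hε] at hsub
  have hI := Complex.I_mul_I
  refine mul_right_cancel₀ two_ne_zero ?_
  linear_combination hadd + hsub + 2 * Real.pi
    * (ε + poissonIntegral μI ε semicircle t / Real.pi : ℝ) * poissonIntegral μI ε f t * hI

end HasL1ConjBoundaryValue

lemma tendsto_re_sqrtSqSubOne {t : ℝ} (ht : t ∈ Ioo (-1 : ℝ) 1) :
    Tendsto (fun ε ↦ ((t + conjPoissonIntegral μI ε semicircle t / Real.pi : ℝ) : ℂ)) (𝓝[>] 0)
      (𝓝 0) := by
  have h := ((tendsto_conjPoissonIntegral_semicircle ht).div_const Real.pi).const_add t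
  rw [neg_div, mul_div_cancel_left₀ _ Real.pi_ne_zero, add_neg_cancel] at h
  exact (Complex.continuous_ofReal.tendsto' 0 0 rfl).comp h

lemma tendsto_im_sqrtSqSubOne {t : ℝ} (ht : t ∈ Ioo (-1 : ℝ) 1) :
    Tendsto (fun ε ↦ ((ε + poissonIntegral μI ε semicircle t / Real.pi : ℝ) : ℂ)) (𝓝[>] 0)
      (𝓝 (semicircle t)) := by
  have h := (tendsto_nhdsWithin_of_tendsto_nhds tendsto_id).add
    ((tendsto_poissonIntegral_semicircle ht).div_const Real.pi)
  rw [mul_div_cancel_left₀ _ Real.pi_ne_zero, zero_add] at h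
  exact (Complex.continuous_ofReal.tendsto _).comp h

namespace HasL1ConjBoundaryValue

variable {f H : ℝ → ℂ}

lemma ae_tendsto_conjPoissonIntegral (h : HasL1ConjBoundaryValue f H) :
    ∀ᵐ t ∂μI, Tendsto (fun ε ↦ conjPoissonIntegral μI ε f t) (𝓝[>] 0) (𝓝 (H t)) := by
  filter_upwards [ae_tendsto_poissonIntegral measurableSet_Ioo h.1,
    ae_tendsto_poissonIntegral measurableSet_Ioo h.integrable_semicircle_mul,
    ae_μI_of_forall fun t ht ↦ ht] with t hPf hPwH ht
  have hw : (semicircle t : ℂ) ≠ 0 := Complex.ofReal_ne_zero.2 (semicircle_pos ht).ne'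
  have hb := tendsto_im_sqrtSqSubOne ht
  have hpi : (Real.pi : ℂ) ≠ 0 := Complex.ofReal_ne_zero.2 Real.pi_ne_zero
  refine (((hPwH.div_const (Real.pi : ℂ)).sub ((tendsto_re_sqrtSqSubOne ht).mul hPf)).div
    hb hw).congr' ?_ |>.trans_eq ?_
  · filter_upwards [self_mem_nhdsWithin, hb.eventually_ne hw] with ε (hε : 0 < ε) hbε
    rw [Pi.div_apply, ← μI, h.poissonIntegral_semicircle_mul hε.ne', mul_div_cancel_left₀ _ hpi,
      add_sub_cancel_left, mul_div_cancel_left₀ _ hbε]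
  · rw [Complex.real_smul, mul_div_cancel_left₀ _ hpi, zero_mul, sub_zero,
      mul_div_cancel_left₀ _ hw]

lemma ae_tendsto_conjPoissonIntegral_semicircle_mul (h : HasL1ConjBoundaryValue f H) :
    ∀ᵐ t ∂μI, Tendsto (fun ε ↦ conjPoissonIntegral μI ε (fun x ↦ (semicircle x : ℂ) * H x) t)
      (𝓝[>] 0) (𝓝 (Real.pi * (∫ x, f x ∂μI - Real.pi * (semicircle t * f t)))) := by
  filter_upwards [ae_tendsto_poissonIntegral measurableSet_Ioo h.1,
    h.ae_tendsto_conjPoissonIntegral, ae_μI_of_forall fun t ht ↦ ht] with t hPf hQf ht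
  refine (((((tendsto_re_sqrtSqSubOne ht).mul hQf).const_add (∫ x, f x ∂μI)).sub
    ((tendsto_im_sqrtSqSubOne ht).mul hPf)).const_mul (Real.pi : ℂ)).congr' ?_ |>.trans_eq ?_
  · filter_upwards [self_mem_nhdsWithin] with ε (hε : 0 < ε)
    exact (h.conjPoissonIntegral_semicircle_mul hε.ne' t).symm
  · rw [Complex.real_smul, zero_mul, add_zero, mul_left_comm (Real.pi : ℂ)]

end HasL1ConjBoundaryValue

lemma FHT_eq_of_tendsto {f : ℝ → ℂ} {t : ℝ} {L : ℂ}
    (h : Tendsto (fun ε ↦ ∫ x, truncatedInv ε (x - t) • f x ∂μI) (𝓝[>] 0) (𝓝 L)) :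
    FHT f t = (Real.pi : ℂ)⁻¹ * L := by
  refine Tendsto.limUnder_eq ((h.const_mul _).congr fun ε ↦ ?_)
  have hset : MeasurableSet {x : ℝ | ε ≤ |x - t|} :=
    measurableSet_le measurable_const (measurable_id.sub_const t).norm
  rw [ofPred_and, ofPred_mem_eq, inter_comm, ← Measure.restrict_restrict hset, ← μI,
    ← integral_indicator hset]
  congr 1
  refine integral_congr_ae (.of_forall fun x ↦ ?_)
  simp only [truncatedInv, indicator_apply, mem_ofPred, ite_smul, zero_smul, Complex.real_smul]
  congr 1
  push_cast
  exact inv_mul_eq_div _ _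

lemma FHT_congr_ae {f g : ℝ → ℂ} (h : f =ᵐ[μI] g) : FHT f = FHT g := by
  have hint (t ε : ℝ) : ∫ x in {x | x ∈ Ioo (-1 : ℝ) 1 ∧ ε ≤ |x - t|}, f x / ((x : ℂ) - t)
      = ∫ x in {x | x ∈ Ioo (-1 : ℝ) 1 ∧ ε ≤ |x - t|}, g x / ((x : ℂ) - t) := by
    refine integral_congr_ae ?_
    filter_upwards [ae_restrict_of_ae_restrict_of_subset (fun x hx ↦ hx.1) h] with x hx
    rw [hx]
  funext t
  simp only [FHT, hint]

namespace HasL1ConjBoundaryValue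

variable {f H : ℝ → ℂ}

lemma FHT_ae_eq (h : HasL1ConjBoundaryValue f H) :
    FHT f =ᵐ[μI] fun t ↦ (Real.pi : ℂ)⁻¹ * H t := by
  filter_upwards [h.ae_tendsto_conjPoissonIntegral,
    ae_tendsto_conjPoissonIntegral_sub measurableSet_Ioo h.1] with t hQ hsub
  exact FHT_eq_of_tendsto (by simpa [μI] using hQ.sub hsub)

lemma FHT_semicircle_mul_FHT_ae_eq (h : HasL1ConjBoundaryValue f H) :
    FHT (fun t ↦ (semicircle t : ℂ) * FHT f t)
      =ᵐ[μI] fun t ↦ (Real.pi : ℂ)⁻¹ * ∫ x, f x ∂μI - semicircle t * f t := by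
  have hcongr : (fun t ↦ (semicircle t : ℂ) * FHT f t)
      =ᵐ[μI] fun t ↦ (Real.pi : ℂ)⁻¹ * ((semicircle t : ℂ) * H t) := by
    filter_upwards [h.FHT_ae_eq] with t ht
    rw [ht, mul_left_comm]
  have hpi : (Real.pi : ℂ) ≠ 0 := Complex.ofReal_ne_zero.2 Real.pi_ne_zero
  rw [FHT_congr_ae hcongr]
  filter_upwards [h.ae_tendsto_conjPoissonIntegral_semicircle_mul,
    ae_tendsto_conjPoissonIntegral_sub measurableSet_Ioo h.integrable_semicircle_mul] with t hQ hsub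
  have hT : Tendsto (fun ε ↦ ∫ x, truncatedInv ε (x - t) • ((semicircle x : ℂ) * H x) ∂μI)
      (𝓝[>] 0) (𝓝 (Real.pi * (∫ x, f x ∂μI - Real.pi * (semicircle t * f t)))) := by
    simpa [μI] using hQ.sub hsub
  have hT' := hT.const_mul (Real.pi : ℂ)⁻¹
  simp only [← integral_const_mul, mul_smul_comm] at hT'
  rw [FHT_eq_of_tendsto hT']
  field_simp

end HasL1ConjBoundaryValue

lemma MemLlogL.hatT_FHT_ae_eq {f : ℝ → ℂ} (hf : MemLlogL f) :
    hatT (FHT f) =ᵐ[μI] fun x ↦ f x - ((Real.pi : ℂ)⁻¹ * ∫ t, f t ∂μI) * (semicircle x : ℂ)⁻¹ := by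
  obtain ⟨H, h⟩ := exists_hasL1ConjBoundaryValue hf
  filter_upwards [h.FHT_semicircle_mul_FHT_ae_eq, ae_μI_of_forall fun t ht ↦ ht] with x hx ht
  have hw : (semicircle x : ℂ) ≠ 0 := Complex.ofReal_ne_zero.2 (semicircle_pos ht).ne'
  rw [semicircle] at hw
  simp only [semicircle, hatT] at hx hw ⊢
  rw [hx]
  field_simp
  ring

end InversionFormula

section ZygmundClass

variable {f g : ℝ → ℂ}

lemma mul_max_log_le_mul_max_log {a b : ℝ} (ha : 0 ≤ a) (hab : a ≤ b) :
    a * max (Real.log a) 0 ≤ b * max (Real.log b) 0 := by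
  have hb := ha.trans hab
  rcases ha.eq_or_lt with rfl | ha
  · rw [zero_mul]
    positivity
  · gcongr

lemma mul_max_log_add_le {a b : ℝ} (ha : 0 ≤ a) (hb : 0 ≤ b) :
    (a + b) * max (Real.log (a + b)) 0
      ≤ 2 * a * max (Real.log (2 * a)) 0 + 2 * b * max (Real.log (2 * b)) 0 := by
  rcases le_total a b with h | h
  · exact (mul_max_log_le_mul_max_log (by positivity) (by linarith)).trans
      (le_add_of_nonneg_left (by positivity))
  · exact (mul_max_log_le_mul_max_log (by positivity) (by linarith)).trans
      (le_add_of_nonneg_right (by positivity))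

lemma mul_max_log_le_rpow_div {s r : ℝ} (hs : 0 ≤ s) (hr : 0 < r) :
    s * max (Real.log s) 0 ≤ s ^ (1 + r) / r := by
  rw [Real.rpow_add_of_nonneg hs zero_le_one hr.le, Real.rpow_one, mul_div_assoc]
  gcongr
  exact max_le (Real.log_le_rpow_div hs hr) (by positivity)

lemma aestronglyMeasurable_norm_mul_max_log (hf : AEStronglyMeasurable f μI) :
    AEStronglyMeasurable (fun x ↦ ‖f x‖ * max (Real.log ‖f x‖) 0) μI := by
  have := hf.norm.aemeasurable
  exact AEMeasurable.aestronglyMeasurable (by fun_prop)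

lemma memLlogL_of_integrable_rpow {r : ℝ} (hr : 0 < r) (hf : AEStronglyMeasurable f μI)
    (hint : Integrable (fun x ↦ ‖f x‖ ^ (1 + r)) μI) : MemLlogL f :=
  ⟨hf, (hint.div_const r).mono' (aestronglyMeasurable_norm_mul_max_log hf) (.of_forall fun x ↦ by
    rw [Real.norm_of_nonneg (by positivity)]
    exact mul_max_log_le_rpow_div (norm_nonneg _) hr)⟩

lemma MemLlogL.congr_ae (hf : MemLlogL f) (h : f =ᵐ[μI] g) : MemLlogL g :=
  ⟨hf.1.congr h, hf.2.congr (h.fun_comp fun z ↦ ‖z‖ * max (Real.log ‖z‖) 0)⟩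

lemma MemLlogL.const_mul (hf : MemLlogL f) (c : ℂ) : MemLlogL fun x ↦ c * f x := by
  refine ⟨hf.1.const_mul c, ?_⟩
  rcases eq_or_ne c 0 with rfl | hc
  · simp
  refine ((hf.integrable_mul_log_div (inv_pos.2 (norm_pos_iff.2 hc))).const_mul ‖c‖).congr
    (.of_forall fun x ↦ ?_)
  simp only [norm_mul, div_inv_eq_mul, mul_comm ‖c‖]
  ring

lemma MemLlogL.add (hf : MemLlogL f) (hg : MemLlogL g) : MemLlogL (f + g) := by
  refine ⟨hf.1.add hg.1, ((hf.const_mul 2).2.add (hg.const_mul 2).2).mono'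
    (aestronglyMeasurable_norm_mul_max_log (hf.1.add hg.1)) (.of_forall fun x ↦ ?_)⟩
  rw [Real.norm_of_nonneg (by positivity)]
  simpa using (mul_max_log_le_mul_max_log (norm_nonneg _) (norm_add_le (f x) (g x))).trans
    (mul_max_log_add_le (norm_nonneg _) (norm_nonneg _))

lemma integrable_one_sub_sq_rpow {r : ℝ} (hr : -1 < r) (hr0 : r ≤ 0) :
    Integrable (fun x : ℝ ↦ (1 - x ^ 2) ^ r) μI := by
  have hrpow := intervalIntegral.intervalIntegrable_rpow' (a := 0) (b := 2) hr
  have hleft : IntegrableOn (fun x : ℝ ↦ (x + 1) ^ r) (Ioo (-1) 1) :=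
    (intervalIntegrable_iff_integrableOn_Ioo_of_le (by norm_num)).1
      (by simpa [show (2 : ℝ) - 1 = 1 by norm_num] using hrpow.comp_add_right 1)
  have hright : IntegrableOn (fun x : ℝ ↦ (1 - x) ^ r) (Ioo (-1) 1) :=
    (intervalIntegrable_iff_integrableOn_Ioo_of_le (by norm_num)).1
      (by simpa [show (1 : ℝ) - 2 = -1 by norm_num] using (hrpow.comp_sub_left 1).symm)
  refine (hleft.add hright).mono' (by fun_prop : Measurable _).aestronglyMeasurable
    (ae_μI_of_forall fun x hx ↦ ?_)
  have hx1 : 0 < x + 1 := by linarith [hx.1]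
  have hx2 : 0 < 1 - x := by linarith [hx.2]
  have hfactor : 1 - x ^ 2 = (x + 1) * (1 - x) := by ring
  rw [Real.norm_of_nonneg (Real.rpow_nonneg (hfactor ▸ by positivity) _)]
  rcases le_total 0 x with h | h
  · exact (Real.rpow_le_rpow_of_nonpos hx2 (by nlinarith) hr0).trans
      (le_add_of_nonneg_left (by positivity))
  · exact (Real.rpow_le_rpow_of_nonpos hx1 (by nlinarith) hr0).trans
      (le_add_of_nonneg_right (by positivity))

lemma memLlogL_inv_semicircle : MemLlogL fun x ↦ (semicircle x : ℂ)⁻¹ := by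
  have hmeas : Measurable fun x ↦ (semicircle x : ℂ)⁻¹ :=
    (Complex.measurable_ofReal.comp continuous_semicircle.measurable).inv
  refine memLlogL_of_integrable_rpow (r := 1 / 2) (by norm_num) hmeas.aestronglyMeasurable
    ((integrable_one_sub_sq_rpow (r := -(3 / 4)) (by norm_num) (by norm_num)).congr
      (ae_μI_of_forall fun x hx ↦ ?_))
  have hpos : 0 ≤ 1 - x ^ 2 := by nlinarith [hx.1, hx.2]
  simp only [norm_inv, Complex.norm_real, Real.norm_of_nonneg (semicircle_nonneg x)]
  rw [semicircle,
    Real.sqrt_eq_rpow, ← Real.rpow_neg hpos, ← Real.rpow_mul hpos]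
  norm_num

end ZygmundClass

section Rearrangement

variable {f g : ℝ → ℂ} {s t a : ℝ}

lemma distFun_eq_measureReal (f : ℝ → ℂ) (a : ℝ) : distFun f a = μI.real {x | a < ‖f x‖} := by
  rw [distFun, measureReal_def, μI, Measure.restrict_apply' measurableSet_Ioo, inter_comm]
  rfl

lemma distFun_congr_ae (h : f =ᵐ[μI] g) : distFun f = distFun g := by
  ext a
  rw [distFun_eq_measureReal, distFun_eq_measureReal]
  refine measureReal_congr ?_
  filter_upwards [h] with x hx
  exact congrArg (fun z : ℂ ↦ a < ‖z‖) hx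

lemma distFun_antitone (f : ℝ → ℂ) : Antitone (distFun f) := fun a b hab ↦ by
  rw [distFun_eq_measureReal, distFun_eq_measureReal]
  exact measureReal_mono fun x ↦ hab.trans_lt

lemma distFun_le_two (f : ℝ → ℂ) (a : ℝ) : distFun f a ≤ 2 := by
  rw [distFun_eq_measureReal, ← measureReal_μI]
  exact measureReal_mono (subset_univ _)

lemma distFun_le_of_forall_gt (h : ∀ b > a, distFun f b ≤ t) : distFun f a ≤ t := by
  obtain ⟨u, hu, hau, hlim⟩ := exists_seq_strictAnti_tendsto a
  have hunion : {x | a < ‖f x‖} = ⋃ n, {x | u n < ‖f x‖} := by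
    ext x
    simp only [mem_ofPred, mem_iUnion]
    exact ⟨fun hx ↦ (hlim.eventually_lt_const hx).exists, fun ⟨n, hn⟩ ↦ (hau n).trans hn⟩
  have hmono : Monotone fun n ↦ {x | u n < ‖f x‖} := fun n m hnm x ↦ (hu.antitone hnm).trans_lt
  have hmeas := (ENNReal.tendsto_toReal (measure_ne_top μI _)).comp
    (tendsto_measure_iUnion_atTop hmono)
  rw [← hunion] at hmeas
  rw [distFun_eq_measureReal]
  refine le_of_tendsto hmeas (.of_forall fun n ↦ ?_)
  exact (distFun_eq_measureReal f (u n)).symm.trans_le (h (u n) (hau n))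

lemma exists_distFun_le (hf : AEStronglyMeasurable f μI) (ht : 0 < t) :
    ∃ a, 0 ≤ a ∧ distFun f a ≤ t := by
  have hempty : ⋂ n : ℕ, {x | (n : ℝ) < ‖f x‖} = ∅ :=
    eq_empty_of_forall_notMem fun x hx ↦
      let ⟨n, hn⟩ := exists_nat_ge ‖f x‖
      hn.not_gt (mem_iInter.1 hx n)
  have hanti : Antitone fun n : ℕ ↦ {x | (n : ℝ) < ‖f x‖} :=
    fun n m hnm x ↦
    (Nat.cast_le (α := ℝ).2 hnm).trans_lt
  have hmeas := (ENNReal.tendsto_toReal (measure_ne_top μI _)).comp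
    (tendsto_measure_iInter_atTop (μ := μI)
      (fun n ↦ nullMeasurableSet_lt aemeasurable_const hf.norm.aemeasurable) hanti
      ⟨0, measure_ne_top μI _⟩)
  rw [hempty, measure_empty] at hmeas
  obtain ⟨n, hn⟩ := (hmeas.eventually_lt_const (u := t) ht).exists
  exact ⟨n, n.cast_nonneg, (distFun_eq_measureReal f n).trans_le hn.le⟩

lemma decRearr_nonneg (f : ℝ → ℂ) (t : ℝ) : 0 ≤ decRearr f t := Real.sInf_nonneg fun _ h ↦ h.1

lemma bddBelow_distFun_le (f : ℝ → ℂ) (t : ℝ) : BddBelow {a | 0 ≤ a ∧ distFun f a ≤ t} :=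
  ⟨0, fun _ h ↦ h.1⟩

lemma decRearr_le_iff (hf : AEStronglyMeasurable f μI) (ht : 0 < t) (ha : 0 ≤ a) :
    decRearr f t ≤ a ↔ distFun f a ≤ t := by
  refine ⟨fun h ↦ distFun_le_of_forall_gt fun b hb ↦ ?_,
    fun h ↦ csInf_le (bddBelow_distFun_le f t) ⟨ha, h⟩⟩
  obtain ⟨c, hc, hcb⟩ := exists_lt_of_csInf_lt (exists_distFun_le hf ht) (h.trans_lt hb)
  exact (distFun_antitone f hcb.le).trans hc.2

lemma decRearr_antitoneOn (hf : AEStronglyMeasurable f μI) :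
    AntitoneOn (decRearr f) (Ioi 0) := fun _ hs t _ hst ↦
  csInf_le_csInf (bddBelow_distFun_le f t) (exists_distFun_le hf hs)
    fun _ ha ↦ ⟨ha.1, ha.2.trans hst⟩

lemma aemeasurable_decRearr (hf : AEStronglyMeasurable f μI) (s : ℝ) :
    AEMeasurable (decRearr f) (volume.restrict (Ioo 0 s)) :=
  aemeasurable_restrict_of_antitoneOn measurableSet_Ioo
    ((decRearr_antitoneOn hf).mono Ioo_subset_Ioi_self)

lemma decRearr_const_mul_le (hf : AEStronglyMeasurable f μI) (c : ℂ) (ht : 0 < t) :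
    decRearr (fun x ↦ c * f x) t ≤ ‖c‖ * decRearr f t := by
  have hnonneg := decRearr_nonneg f t
  rw [decRearr_le_iff (hf.const_mul c) ht (by positivity)]
  refine le_trans ?_ ((decRearr_le_iff hf ht hnonneg).1 le_rfl)
  rw [distFun_eq_measureReal, distFun_eq_measureReal]
  refine measureReal_mono fun x (hx : _ < ‖c * f x‖) ↦ ?_
  rw [norm_mul] at hx
  exact lt_of_mul_lt_mul_left hx (norm_nonneg c)

lemma volume_lt_decRearr (hf : AEStronglyMeasurable f μI) (ha : 0 ≤ a) :
    volume.restrict (Ioo 0 2) {t | a < decRearr f t} = ENNReal.ofReal (distFun f a) := by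
  have hset : {t | a < decRearr f t} ∩ Ioo 0 2 = Ioo 0 (distFun f a) := by
    ext t
    refine ⟨fun ⟨hat, ht⟩ ↦ ⟨ht.1, ?_⟩, fun ht ↦ ⟨?_, ht.1, ht.2.trans_le (distFun_le_two f a)⟩⟩
    · exact lt_of_not_ge fun h ↦ hat.not_ge ((decRearr_le_iff hf ht.1 ha).2 h)
    · exact lt_of_not_ge fun h ↦ ht.2.not_ge ((decRearr_le_iff hf ht.1 ha).1 h)
  rw [Measure.restrict_apply' measurableSet_Ioo, hset, Real.volume_Ioo, sub_zero]

lemma map_decRearr_eq_map_norm (hf : AEStronglyMeasurable f μI) :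
    (volume.restrict (Ioo 0 2)).map (decRearr f) = μI.map fun x ↦ ‖f x‖ := by
  have hdec := aemeasurable_decRearr hf 2
  have hnorm := hf.norm.aemeasurable
  have huniv : volume.restrict (Ioo (0 : ℝ) 2) univ = μI univ := by
    rw [μI, Measure.restrict_apply_univ, Measure.restrict_apply_univ, Real.volume_Ioo,
      Real.volume_Ioo]
    norm_num
  refine ext_of_generate_finite _ (borel_eq_generateFrom_Ioi ℝ ▸ BorelSpace.measurable_eq)
    isPiSystem_Ioi ?_ ?_
  · rintro _ ⟨a, rfl⟩
    rw [Measure.map_apply_of_aemeasurable hdec measurableSet_Ioi,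
      Measure.map_apply_of_aemeasurable hnorm measurableSet_Ioi]
    rcases lt_or_ge a 0 with ha | ha
    · convert huniv using 2
      · exact eq_univ_of_forall fun t ↦ ha.trans_le (decRearr_nonneg f t)
      · exact eq_univ_of_forall fun x ↦ ha.trans_le (norm_nonneg (f x))
    · refine (volume_lt_decRearr hf ha).trans ?_
      rw [distFun_eq_measureReal, ofReal_measureReal]
      rfl
  · rwa [Measure.map_apply_of_aemeasurable hdec .univ,
      Measure.map_apply_of_aemeasurable hnorm .univ]

lemma lintegral_comp_decRearr (hf : AEStronglyMeasurable f μI) {φ : ℝ → ENNReal}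
    (hφ : Measurable φ) : ∫⁻ t in Ioo 0 2, φ (decRearr f t) = ∫⁻ x, φ ‖f x‖ ∂μI := by
  rw [← lintegral_map' hφ.aemeasurable (aemeasurable_decRearr hf 2),
    map_decRearr_eq_map_norm hf, lintegral_map' hφ.aemeasurable hf.norm.aemeasurable]

/-- The integral `∫_0^s f*`: Peetre's `K`-functional of `f` for the couple `(L¹, L^∞)`. It takes
extended values, so that no integrability has to be assumed. -/
def kFunctional (f : ℝ → ℂ) (s : ℝ) : ENNReal :=
  ∫⁻ t in Ioo 0 s, ENNReal.ofReal (decRearr f t)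

lemma kFunctional_mono (f : ℝ → ℂ) : Monotone (kFunctional f) := fun _ _ hst ↦
  lintegral_mono_set (Ioo_subset_Ioo_right hst)

lemma kFunctional_two (hf : AEStronglyMeasurable f μI) :
    kFunctional f 2 = ∫⁻ x, ‖f x‖ₑ ∂μI := by
  simp only [kFunctional, lintegral_comp_decRearr hf ENNReal.measurable_ofReal,
    ofReal_norm]

lemma ofReal_le_add_ofReal_sub (a b : ℝ) :
    ENNReal.ofReal b ≤ ENNReal.ofReal a + ENNReal.ofReal (b - a) := by
  simpa using ENNReal.ofReal_add_le (p := a) (q := b - a)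

lemma lintegral_add_ofReal_sub (f : ℝ → ℂ) (a s : ℝ) :
    ∫⁻ t in Ioo 0 s, (ENNReal.ofReal a + ENNReal.ofReal (decRearr f t - a))
      = ENNReal.ofReal a * ENNReal.ofReal s
        + ∫⁻ t in Ioo 0 s, ENNReal.ofReal (decRearr f t - a) := by
  rw [lintegral_add_left measurable_const, lintegral_const, Measure.restrict_apply_univ,
    Real.volume_Ioo, sub_zero]

lemma kFunctional_le (hf : AEStronglyMeasurable f μI) (hs : s ≤ 2) (a : ℝ) :
    kFunctional f s ≤ ENNReal.ofReal a * ENNReal.ofReal s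
      + ∫⁻ x, ENNReal.ofReal (‖f x‖ - a) ∂μI := by
  refine (lintegral_mono fun t ↦ ofReal_le_add_ofReal_sub a (decRearr f t)).trans ?_
  rw [lintegral_add_ofReal_sub, ← lintegral_comp_decRearr hf (φ := fun y ↦ ENNReal.ofReal (y - a))
    (by fun_prop)]
  gcongr

lemma kFunctional_eq (hf : AEStronglyMeasurable f μI) (hs : s ∈ Ioc 0 2) :
    kFunctional f s = ENNReal.ofReal (decRearr f s) * ENNReal.ofReal s
      + ∫⁻ x, ENNReal.ofReal (‖f x‖ - decRearr f s) ∂μI := by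
  refine (kFunctional_le hf hs.2 _).antisymm ?_
  set a := decRearr f s
  have hvanish : ∫⁻ t in Ioo 0 2, ENNReal.ofReal (decRearr f t - a)
      ≤ ∫⁻ t in Ioo 0 s, ENNReal.ofReal (decRearr f t - a) := by
    rw [← lintegral_indicator measurableSet_Ioo, ← lintegral_indicator measurableSet_Ioo]
    refine lintegral_mono fun t ↦ indicator_apply_le' (fun ht ↦ ?_) fun _ ↦ zero_le
    rcases lt_or_ge t s with hts | hts
    · rw [indicator_of_mem (show t ∈ Ioo 0 s from ⟨ht.1, hts⟩)]
    · have hta : decRearr f t ≤ a := decRearr_antitoneOn hf hs.1 ht.1 hts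
      rw [ENNReal.ofReal_of_nonpos (sub_nonpos.2 hta)]
      exact zero_le
  rw [← lintegral_comp_decRearr hf (φ := fun y ↦ ENNReal.ofReal (y - a)) (by fun_prop)]
  calc _ ≤ ∫⁻ t in Ioo 0 s, (ENNReal.ofReal a + ENNReal.ofReal (decRearr f t - a)) := by
        rw [lintegral_add_ofReal_sub]
        gcongr
    _ = kFunctional f s := by
        refine setLIntegral_congr_fun measurableSet_Ioo fun t ht ↦ ?_
        have hat : a ≤ decRearr f t := decRearr_antitoneOn hf ht.1 hs.1 ht.2.le
        rw [← ENNReal.ofReal_add (decRearr_nonneg f s) (sub_nonneg.2 hat), add_sub_cancel]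

lemma kFunctional_add_le (hf : AEStronglyMeasurable f μI) (hg : AEStronglyMeasurable g μI)
    (hs : s ∈ Ioc 0 2) : kFunctional (f + g) s ≤ kFunctional f s + kFunctional g s := by
  set a := decRearr f s
  set b := decRearr g s
  have hpointwise (x : ℝ) : ENNReal.ofReal (‖(f + g) x‖ - (a + b))
      ≤ ENNReal.ofReal (‖f x‖ - a) + ENNReal.ofReal (‖g x‖ - b) :=
    (ENNReal.ofReal_le_ofReal (by rw [Pi.add_apply]; linarith [norm_add_le (f x) (g x)])).trans
      ENNReal.ofReal_add_le
  calc kFunctional (f + g) s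
      ≤ ENNReal.ofReal (a + b) * ENNReal.ofReal s
          + ∫⁻ x, ENNReal.ofReal (‖(f + g) x‖ - (a + b)) ∂μI := kFunctional_le (hf.add hg) hs.2 _
    _ ≤ (ENNReal.ofReal a + ENNReal.ofReal b) * ENNReal.ofReal s
          + ∫⁻ x, (ENNReal.ofReal (‖f x‖ - a) + ENNReal.ofReal (‖g x‖ - b)) ∂μI := by
        gcongr
        · exact ENNReal.ofReal_add_le
        · exact hpointwise _
    _ = kFunctional f s + kFunctional g s := by
        have := hf.norm.aemeasurable
        rw [kFunctional_eq hf hs, kFunctional_eq hg hs, lintegral_add_left' (by fun_prop)]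
        ring

end Rearrangement

section ZygmundNorm

variable {f g : ℝ → ℂ} {t : ℝ}

lemma lintegral_lintegral_Ioo_swap {a b : ℝ} {F : ℝ → ℝ → ENNReal}
    (hF : AEMeasurable (Function.uncurry F)
      ((volume.restrict (Ioo a b)).prod (volume.restrict (Ioo a b)))) :
    ∫⁻ t in Ioo a b, ∫⁻ s in Ioo t b, F t s = ∫⁻ s in Ioo a b, ∫⁻ t in Ioo a s, F t s := by
  have hright : ∀ t ∈ Ioo a b,
      ∫⁻ s in Ioo t b, F t s = ∫⁻ s in Ioo a b, (Ioi t).indicator (F t) s := fun t ht ↦ by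
    rw [setLIntegral_indicator measurableSet_Ioi, Ioi_inter_Ioo, max_eq_left ht.1.le]
  have hleft : ∀ s ∈ Ioo a b,
      ∫⁻ t in Ioo a b, (Ioi t).indicator (F t) s = ∫⁻ t in Ioo a s, F t s := fun s hs ↦ by
    rw [← min_eq_left hs.2.le, ← Iio_inter_Ioo, min_eq_left hs.2.le,
      ← setLIntegral_indicator measurableSet_Iio]
    rfl
  rw [setLIntegral_congr_fun measurableSet_Ioo hright, lintegral_lintegral_swap,
    setLIntegral_congr_fun measurableSet_Ioo hleft]
  exact hF.indicator (measurableSet_lt measurable_fst measurable_snd)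

lemma log_two_mul_exp_one_div (ht : 0 < t) :
    Real.log (2 * Real.exp 1 / t) = 1 + Real.log (2 / t) := by
  rw [mul_div_right_comm, Real.log_mul (by positivity) (Real.exp_pos 1).ne', Real.log_exp, add_comm]

lemma log_two_div_nonneg (ht : t ∈ Ioo 0 2) : 0 ≤ Real.log (2 / t) :=
  Real.log_nonneg ((one_le_div ht.1).2 ht.2.le)

lemma lintegral_inv_Ioo {a b : ℝ} (ha : 0 < a) (hab : a ≤ b) :
    ∫⁻ s in Ioo a b, ENNReal.ofReal s⁻¹ = ENNReal.ofReal (Real.log (b / a)) := by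
  have hint : IntegrableOn (fun s : ℝ ↦ s⁻¹) (Ioo a b) :=
    (intervalIntegrable_iff_integrableOn_Ioo_of_le hab).1
      (intervalIntegrable_inv_iff.2 (.inr (notMem_uIcc_of_lt ha (ha.trans_le hab))))
  rw [← ofReal_integral_eq_lintegral_ofReal hint, ← integral_Ioc_eq_integral_Ioo,
    ← intervalIntegral.integral_of_le hab, integral_inv_of_pos ha (ha.trans_le hab)]
  filter_upwards [ae_restrict_mem measurableSet_Ioo] with s hs
  exact inv_nonneg.2 (ha.trans hs.1).le

/-- The `L log L` norm with extended values, infinite outside the Zygmund space. -/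
def llogLENorm (f : ℝ → ℂ) : ENNReal :=
  ∫⁻ t in Ioo 0 2, ENNReal.ofReal (decRearr f t * Real.log (2 * Real.exp 1 / t))

lemma llogLENorm_eq_kFunctional (hf : AEStronglyMeasurable f μI) :
    llogLENorm f = kFunctional f 2 + ∫⁻ s in Ioo 0 2, kFunctional f s * ENNReal.ofReal s⁻¹ := by
  have hdec := (aemeasurable_decRearr hf 2).ennreal_ofReal
  have hlog : ∀ t ∈ Ioo (0 : ℝ) 2, ENNReal.ofReal (decRearr f t * Real.log (2 * Real.exp 1 / t))
      = ENNReal.ofReal (decRearr f t)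
        + ∫⁻ s in Ioo t 2, ENNReal.ofReal (decRearr f t) * ENNReal.ofReal s⁻¹ := fun t ht ↦ by
    rw [lintegral_const_mul _ (by fun_prop), lintegral_inv_Ioo ht.1 ht.2.le,
      log_two_mul_exp_one_div ht.1, ENNReal.ofReal_mul (decRearr_nonneg f t),
      ENNReal.ofReal_add zero_le_one (log_two_div_nonneg ht), ENNReal.ofReal_one, mul_add, mul_one]
  rw [llogLENorm, setLIntegral_congr_fun measurableSet_Ioo hlog, lintegral_add_left' hdec,
    lintegral_lintegral_Ioo_swap]
  · simp only [lintegral_mul_const' _ _ ENNReal.ofReal_ne_top]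
    rfl
  · exact hdec.comp_fst.mul (by fun_prop)

lemma llogLENorm_add_le (hf : AEStronglyMeasurable f μI) (hg : AEStronglyMeasurable g μI) :
    llogLENorm (f + g) ≤ llogLENorm f + llogLENorm g := by
  have hmeas := (kFunctional_mono f).measurable
  rw [llogLENorm_eq_kFunctional hf, llogLENorm_eq_kFunctional hg,
    llogLENorm_eq_kFunctional (hf.add hg), add_add_add_comm, ← lintegral_add_left (by fun_prop)]
  refine add_le_add (kFunctional_add_le hf hg ⟨two_pos, le_rfl⟩)
    (setLIntegral_mono' measurableSet_Ioo fun s hs ↦ ?_)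
  rw [← add_mul]
  gcongr
  exact kFunctional_add_le hf hg (Ioo_subset_Ioc_self hs)

lemma llogLENorm_const_mul_le (hf : AEStronglyMeasurable f μI) (c : ℂ) :
    llogLENorm (fun x ↦ c * f x) ≤ ‖c‖ₑ * llogLENorm f := by
  rw [llogLENorm, llogLENorm, ← lintegral_const_mul' _ _ enorm_ne_top]
  refine setLIntegral_mono' measurableSet_Ioo fun t ht ↦ ?_
  rw [← ofReal_norm, ← ENNReal.ofReal_mul (norm_nonneg c), ← mul_assoc]
  refine ENNReal.ofReal_le_ofReal (mul_le_mul_of_nonneg_right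
    (decRearr_const_mul_le hf c ht.1) ?_)
  rw [log_two_mul_exp_one_div ht.1]
  linarith [log_two_div_nonneg ht]

lemma MemLlogL.llogLENorm_lt_top (hf : MemLlogL f) : llogLENorm f < ⊤ := by
  have hbound : ∀ t ∈ Ioo (0 : ℝ) 2, decRearr f t * Real.log (2 * Real.exp 1 / t)
      ≤ 2 * (decRearr f t * max (Real.log (decRearr f t)) 0)
        + 2 * ((2 * Real.exp 1) ^ (1 / 2 : ℝ) * t ^ (-(1 / 2) : ℝ)) := fun t ht ↦ by
    have h := mul_le_mul_log_add_mul_exp (q := Real.log (2 * Real.exp 1 / t) * (1 / 2)) zero_lt_one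
      (decRearr_nonneg f t)
    have htpos := ht.1
    rw [div_one, one_mul, ← Real.rpow_def_of_pos (by positivity), Real.div_rpow (by positivity)
      ht.1.le, div_eq_mul_inv (_ ^ _), ← Real.rpow_neg ht.1.le] at h
    linarith
  have hsing : IntegrableOn (fun t : ℝ ↦ 2 * ((2 * Real.exp 1) ^ (1 / 2 : ℝ) * t ^ (-(1 / 2) : ℝ)))
      (Ioo 0 2) :=
    (((intervalIntegrable_iff_integrableOn_Ioo_of_le zero_le_two).1
      (intervalIntegral.intervalIntegrable_rpow' (by norm_num))).const_mul _).const_mul 2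
  calc llogLENorm f
      ≤ ∫⁻ t in Ioo 0 2, (ENNReal.ofReal (2 * (decRearr f t * max (Real.log (decRearr f t)) 0))
          + ENNReal.ofReal (2 * ((2 * Real.exp 1) ^ (1 / 2 : ℝ) * t ^ (-(1 / 2) : ℝ)))) :=
        setLIntegral_mono' measurableSet_Ioo fun t ht ↦
          (ENNReal.ofReal_le_ofReal (hbound t ht)).trans ENNReal.ofReal_add_le
    _ < ⊤ := by
        rw [lintegral_add_right _ (by fun_prop), lintegral_comp_decRearr hf.1
          (φ := fun y ↦ ENNReal.ofReal (2 * (y * max (Real.log y) 0))) (by fun_prop)]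
        exact ENNReal.add_lt_top.2 ⟨(hf.2.const_mul 2).lintegral_lt_top, hsing.lintegral_lt_top⟩

lemma llogLNorm_congr_ae (h : f =ᵐ[μI] g) : llogLNorm f = llogLNorm g := by
  simp only [llogLNorm, decRearr, distFun_congr_ae h]

lemma llogLNorm_eq_toReal (hf : AEStronglyMeasurable f μI) :
    llogLNorm f = (llogLENorm f).toReal := by
  refine integral_eq_lintegral_of_nonneg_ae ?_
    ((aemeasurable_decRearr hf 2).mul (by fun_prop)).aestronglyMeasurable
  filter_upwards [ae_restrict_mem measurableSet_Ioo] with t ht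
  refine mul_nonneg (decRearr_nonneg f t) ?_
  rw [log_two_mul_exp_one_div ht.1]
  linarith [log_two_div_nonneg ht]

lemma MemLlogL.llogLNorm_add_le (hf : MemLlogL f) (hg : MemLlogL g) :
    llogLNorm (f + g) ≤ llogLNorm f + llogLNorm g := by
  rw [llogLNorm_eq_toReal hf.1, llogLNorm_eq_toReal hg.1, llogLNorm_eq_toReal (hf.1.add hg.1)]
  exact ENNReal.toReal_le_add (llogLENorm_add_le hf.1 hg.1) hf.llogLENorm_lt_top.ne
    hg.llogLENorm_lt_top.ne

lemma MemLlogL.llogLNorm_const_mul_le (hf : MemLlogL f) (c : ℂ) :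
    llogLNorm (fun x ↦ c * f x) ≤ ‖c‖ * llogLNorm f := by
  rw [llogLNorm_eq_toReal hf.1, llogLNorm_eq_toReal (hf.1.const_mul c), ← toReal_enorm c,
    ← ENNReal.toReal_mul]
  exact ENNReal.toReal_mono (ENNReal.mul_ne_top enorm_ne_top hf.llogLENorm_lt_top.ne)
    (llogLENorm_const_mul_le hf.1 c)

lemma MemLlogL.norm_integral_le_llogLNorm (hf : MemLlogL f) :
    ‖∫ x, f x ∂μI‖ ≤ llogLNorm f := by
  rw [llogLNorm_eq_toReal hf.1, ← toReal_enorm]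
  refine ENNReal.toReal_mono hf.llogLENorm_lt_top.ne
    ((enorm_integral_le_lintegral_enorm f).trans ?_)
  rw [← kFunctional_two hf.1, llogLENorm_eq_kFunctional hf.1]
  exact le_self_add

end ZygmundNorm

/-- For `f ∈ L log L(-1,1)`: `f - ((1/π)∫f)·(1-x²)^{-1/2} = T̂(T(f))` a.e.; consequently
`T̂∘T` maps `L log L` into itself with norm at most `1 + (1/π)‖(1-x²)^{-1/2}‖_{L log L}`. -/
theorem hatT_comp_FHT (f : ℝ → ℂ) (hf : MemLlogL f) :
    (∀ᵐ x : ℝ ∂μI,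
      f x - ((Real.pi : ℂ)⁻¹ * (∫ t in Set.Ioo (-1 : ℝ) 1, f t)) *
          ((Real.sqrt (1 - x ^ 2) : ℂ))⁻¹
        = hatT (FHT f) x) ∧
    MemLlogL (hatT (FHT f)) ∧
    llogLNorm (hatT (FHT f))
      ≤ (1 + Real.pi⁻¹ * llogLNorm fun x : ℝ => ((Real.sqrt (1 - x ^ 2) : ℂ))⁻¹) *
          llogLNorm f := by
  set c : ℂ := (Real.pi : ℂ)⁻¹ * ∫ t in Ioo (-1 : ℝ) 1, f t
  set W : ℝ → ℂ := fun x ↦ (Real.sqrt (1 - x ^ 2) : ℂ)⁻¹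
  have hW : MemLlogL W := memLlogL_inv_semicircle
  have hinv : hatT (FHT f) =ᵐ[μI] fun x ↦ f x - c * W x := hf.hatT_FHT_ae_eq
  have hadd : (f + fun x ↦ -c * W x) =ᵐ[μI] hatT (FHT f) := by
    filter_upwards [hinv] with x hx
    rw [hx, Pi.add_apply, neg_mul, sub_eq_add_neg]
  have hc : ‖-c‖ ≤ Real.pi⁻¹ * llogLNorm f := by
    rw [norm_neg, norm_mul, norm_inv, Complex.norm_real, Real.norm_of_nonneg Real.pi_pos.le]
    exact mul_le_mul_of_nonneg_left hf.norm_integral_le_llogLNorm (by positivity)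
  refine ⟨hinv.mono fun x hx ↦ hx.symm, (hf.add (hW.const_mul (-c))).congr_ae hadd, ?_⟩
  calc llogLNorm (hatT (FHT f)) = llogLNorm (f + fun x ↦ -c * W x) := (llogLNorm_congr_ae hadd).symm
    _ ≤ llogLNorm f + ‖-c‖ * llogLNorm W := (hf.llogLNorm_add_le (hW.const_mul (-c))).trans
        (add_le_add_right (hW.llogLNorm_const_mul_le (-c)) _)
    _ ≤ llogLNorm f + Real.pi⁻¹ * llogLNorm f * llogLNorm W := by
        gcongr
        exact (norm_nonneg _).trans hW.norm_integral_le_llogLNorm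
    _ = (1 + Real.pi⁻¹ * llogLNorm W) * llogLNorm f := by ring
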